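/- arXiv:1106.6343 — 2 statements merged into one kernel-verified Lean document; each statement's English description precedes it below -/
import Mathlib

section
/- (Simplification of nodal curves.) Let α ∈ ℂ^I be such that C_α is a nodal curve with exactly l ≥ 1 nodes, and let P_{i_1},…,P_{i_λ} be λ pairwise distinct nodes of C_α, where 1 ≤ λ ≤ l. Then for all real ε > 0 and δ > 0 there exists β ∈ ℂ^I with ‖β − α‖ < ε such that C_β is a nodal curve with exactly λ nodes, and these nodes can be enumerated as Q_1,…,Q_λ with ‖Q_k − P_{i_k}‖ < δ for k = 1,…,λ. -/
open MvPolynomial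

/-- The index set `I` of pairs `(ν,μ)` of nonnegative integers with `νp + μq < pq`
(for `p, q ≥ 1` the conditions `ν < q`, `μ < p` are automatic). -/
def idxSet (p q : ℕ) : Finset (ℕ × ℕ) :=
  (Finset.range q ×ˢ Finset.range p).filter fun t => t.1 * p + t.2 * q < p * q

/-- The normed Weierstraß polynomial `F_α = Y^p − X^q + Σ a_{νμ} X^ν Y^μ`,
as a polynomial in two variables `X 0 = X`, `X 1 = Y`. -/
noncomputable def wPoly (K : Type) [CommRing K] (p q : ℕ) (a : idxSet p q → K) :
    MvPolynomial (Fin 2) K :=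
  X 1 ^ p - X 0 ^ q + ∑ i : idxSet p q, C (a i) * X 0 ^ (i : ℕ × ℕ).1 * X 1 ^ (i : ℕ × ℕ).2

/-- The Hessian determinant `G_{XX} G_{YY} − G_{XY}²` of a polynomial in `X, Y`. -/
noncomputable def hessPoly (K : Type) [CommRing K] (G : MvPolynomial (Fin 2) K) :
    MvPolynomial (Fin 2) K :=
  pderiv 0 (pderiv 0 G) * pderiv 1 (pderiv 1 G) - (pderiv 0 (pderiv 1 G)) ^ 2

/-- `P` is a singular point of the curve `G = 0`. -/
def IsSingAt (K : Type) [CommRing K] (G : MvPolynomial (Fin 2) K) (P : K × K) : Prop :=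
  eval ![P.1, P.2] G = 0 ∧ eval ![P.1, P.2] (pderiv 0 G) = 0 ∧ eval ![P.1, P.2] (pderiv 1 G) = 0

/-- `P` is a node of the curve `G = 0`. -/
def IsNodeAt (K : Type) [CommRing K] (G : MvPolynomial (Fin 2) K) (P : K × K) : Prop :=
  IsSingAt K G P ∧ eval ![P.1, P.2] (hessPoly K G) ≠ 0

/-- The weight `d₀ p + d₁ q` of an exponent vector. -/
def expWt (p q : ℕ) (d : Fin 2 →₀ ℕ) : ℕ := d 0 * p + d 1 * q

lemma expWt_add (p q : ℕ) (d e : Fin 2 →₀ ℕ) :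
    expWt p q (d + e) = expWt p q d + expWt p q e := by
  simp only [expWt, Finsupp.add_apply]; ring

/-- Polynomials all of whose monomials `d` satisfy `expWt p q d + u < k`. -/
noncomputable abbrev wtLT (p q u k : ℕ) : Submodule ℂ (MvPolynomial (Fin 2) ℂ) :=
  restrictSupport ℂ {d | expWt p q d + u < k}

/-- Polynomials of degree `< m` in the first and `< n` in the second variable. -/
noncomputable abbrev boxPoly (m n : ℕ) : Submodule ℂ (MvPolynomial (Fin 2) ℂ) :=
  restrictSupport ℂ {d | d 0 < m ∧ d 1 < n}

lemma mem_restrictSupport_iff_coeff {s : Set (Fin 2 →₀ ℕ)} {G : MvPolynomial (Fin 2) ℂ} :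
    G ∈ restrictSupport ℂ s ↔ ∀ d, coeff d G ≠ 0 → d ∈ s := by
  rw [mem_restrictSupport_iff]
  simp [Set.subset_def]

open Pointwise in
lemma mul_mem_restrictSupport {s t r : Set (Fin 2 →₀ ℕ)} {G H : MvPolynomial (Fin 2) ℂ}
    (hG : G ∈ restrictSupport ℂ s) (hH : H ∈ restrictSupport ℂ t)
    (h : ∀ d ∈ s, ∀ e ∈ t, d + e ∈ r) : G * H ∈ restrictSupport ℂ r := by
  have h1 : G * H ∈ restrictSupport ℂ (s + t) := by
    rw [restrictSupport_add]; exact Submodule.mul_mem_mul hG hH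
  refine restrictSupport_mono _ ?_ h1
  rintro _ ⟨d, hd, e, he, rfl⟩
  exact h d hd e he

lemma wtLT_mono {p q u k u' k' : ℕ} (h : k + u' ≤ k' + u) : wtLT p q u k ≤ wtLT p q u' k' := by
  refine restrictSupport_mono _ fun d hd => ?_
  simp only [Set.mem_ofPred_eq] at *
  omega

lemma mul_mem_wtLT {p q u k v : ℕ} {A f : MvPolynomial (Fin 2) ℂ}
    (hA : A ∈ wtLT p q u (k + 1)) (hf : f ∈ wtLT p q 0 (u + v)) : A * f ∈ wtLT p q 0 (k + v) := by
  refine mul_mem_restrictSupport hA hf fun d hd e he => ?_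
  simp only [Set.mem_ofPred_eq, expWt_add] at *
  omega

lemma exists_mem_wtLT (p q : ℕ) (G : MvPolynomial (Fin 2) ℂ) : ∃ k, G ∈ wtLT p q 0 k := by
  refine ⟨∑ d ∈ G.support, expWt p q d + 1, mem_restrictSupport_iff_coeff.2 fun d hd => ?_⟩
  have := Finset.single_le_sum (f := expWt p q) (fun _ _ => Nat.zero_le _) (mem_support_iff.2 hd)
  simp only [Set.mem_ofPred_eq]
  omega

/-- Splitting off `X ^ e` from a monomial divisible by it. -/
lemma monomial_eq_mul_sub {d e : Fin 2 →₀ ℕ} (h : e ≤ d) (f : MvPolynomial (Fin 2) ℂ) :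
    monomial d (1 : ℂ) = monomial (d - e) 1 * f - monomial (d - e) 1 * (f - monomial e 1) := by
  rw [mul_sub, monomial_mul, tsub_add_cancel_of_le h]; simp

/-- Weighted division with remainder by two polynomials with leading monomials `X^m`, `Y^n`. -/
theorem exists_weighted_division {p q m n : ℕ} {f g : MvPolynomial (Fin 2) ℂ}
    (hf : f - monomial (Finsupp.single 0 m) 1 ∈ wtLT p q 0 (m * p))
    (hg : g - monomial (Finsupp.single 1 n) 1 ∈ wtLT p q 0 (n * q)) (k : ℕ) :
    ∀ H ∈ wtLT p q 0 k, ∃ r ∈ boxPoly m n ⊓ wtLT p q 0 k, ∃ A ∈ wtLT p q (m * p) k,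
      ∃ B ∈ wtLT p q (n * q) k, H = r + A * f + B * g := by
  induction k with
  | zero =>
    intro H hH
    have : H = 0 := by
      ext d
      by_contra h
      simpa using mem_restrictSupport_iff_coeff.1 hH d h
    exact ⟨0, zero_mem _, 0, zero_mem _, 0, zero_mem _, by simp [this]⟩
  | succ k ih =>
    have lift : ∀ H ∈ wtLT p q 0 k, ∃ r ∈ boxPoly m n ⊓ wtLT p q 0 (k + 1),
        ∃ A ∈ wtLT p q (m * p) (k + 1), ∃ B ∈ wtLT p q (n * q) (k + 1),
          H = r + A * f + B * g := by
      intro H hH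
      obtain ⟨r, hr, A, hA, B, hB, e⟩ := ih H hH
      exact ⟨r, ⟨hr.1, wtLT_mono (by omega) hr.2⟩, A, wtLT_mono (by omega) hA, B,
        wtLT_mono (by omega) hB, e⟩
    intro H hH
    rw [wtLT, restrictSupport_eq_span] at hH
    induction hH using Submodule.span_induction with
    | zero => exact ⟨0, zero_mem _, 0, zero_mem _, 0, zero_mem _, by simp⟩
    | add H H' _ _ h h' =>
      obtain ⟨r, hr, A, hA, B, hB, e⟩ := h
      obtain ⟨r', hr', A', hA', B', hB', e'⟩ := h'
      exact ⟨r + r', add_mem hr hr', A + A', add_mem hA hA', B + B', add_mem hB hB', by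
        rw [e, e']; ring⟩
    | smul c H _ h =>
      obtain ⟨r, hr, A, hA, B, hB, e⟩ := h
      exact ⟨c • r, Submodule.smul_mem _ c hr, c • A, Submodule.smul_mem _ c hA, c • B,
        Submodule.smul_mem _ c hB, by rw [e]; simp [smul_add]⟩
    | mem H h =>
      obtain ⟨d, hd, rfl⟩ := h
      simp only [Set.mem_ofPred_eq, add_zero] at hd
      by_cases h0 : m ≤ d 0
      · have hle : Finsupp.single 0 m ≤ d := by simpa using h0
        have hw : expWt p q (d - Finsupp.single 0 m) + m * p = expWt p q d := by
          conv_rhs => rw [← tsub_add_cancel_of_le hle, expWt_add]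
          simp [expWt]
        have hA : monomial (d - Finsupp.single 0 m) (1 : ℂ) ∈ wtLT p q (m * p) (k + 1) := by
          simp [monomial_mem_restrictSupport]; omega
        obtain ⟨r, hr, A, hA', B, hB, e⟩ := lift _ (mul_mem_wtLT (v := 0) hA hf)
        refine ⟨-r, neg_mem hr, _, sub_mem hA hA', -B, neg_mem hB, ?_⟩
        simp only []
        rw [monomial_eq_mul_sub hle f, e]; ring
      by_cases h1 : n ≤ d 1
      · have hle : Finsupp.single 1 n ≤ d := by simpa using h1
        have hw : expWt p q (d - Finsupp.single 1 n) + n * q = expWt p q d := by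
          conv_rhs => rw [← tsub_add_cancel_of_le hle, expWt_add]
          simp [expWt]
        have hA : monomial (d - Finsupp.single 1 n) (1 : ℂ) ∈ wtLT p q (n * q) (k + 1) := by
          simp [monomial_mem_restrictSupport]; omega
        obtain ⟨r, hr, A, hA', B, hB, e⟩ := lift _ (mul_mem_wtLT (v := 0) hA hg)
        refine ⟨-r, neg_mem hr, -A, neg_mem hA', _, sub_mem hA hB, ?_⟩
        simp only []
        rw [monomial_eq_mul_sub hle g, e]; ring
      refine ⟨monomial d 1, ⟨?_, ?_⟩, 0, zero_mem _, 0, zero_mem _, by simp⟩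
      · exact (monomial_mem_restrictSupport ℂ).2 (Or.inl ⟨by omega, by omega⟩)
      · exact (monomial_mem_restrictSupport ℂ).2 (Or.inl (by simpa using hd))

/-- Division by a single polynomial with leading monomial `Y^n`. -/
theorem exists_division_second {p q n : ℕ} {g : MvPolynomial (Fin 2) ℂ}
    (hg : g - monomial (Finsupp.single 1 n) 1 ∈ wtLT p q 0 (n * q)) (H : MvPolynomial (Fin 2) ℂ) :
    ∃ r ∈ restrictSupport ℂ {d : Fin 2 →₀ ℕ | d 1 < n}, ∃ B, H = r + B * g := by
  obtain ⟨k, hk⟩ := exists_mem_wtLT p q H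
  induction k generalizing H with
  | zero =>
    have : H = 0 := by
      ext d
      by_contra h
      simpa using mem_restrictSupport_iff_coeff.1 hk d h
    exact ⟨0, zero_mem _, 0, by simp [this]⟩
  | succ k ih =>
    rw [wtLT, restrictSupport_eq_span] at hk
    induction hk using Submodule.span_induction with
    | zero => exact ⟨0, zero_mem _, 0, by simp⟩
    | add H H' _ _ h h' =>
      obtain ⟨r, hr, B, e⟩ := h
      obtain ⟨r', hr', B', e'⟩ := h'
      exact ⟨r + r', add_mem hr hr', B + B', by rw [e, e']; ring⟩
    | smul c H _ h =>
      obtain ⟨r, hr, B, e⟩ := h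
      exact ⟨c • r, Submodule.smul_mem _ c hr, c • B, by rw [e]; simp [smul_add]⟩
    | mem H h =>
      obtain ⟨d, hd, rfl⟩ := h
      simp only [Set.mem_ofPred_eq, add_zero] at hd
      by_cases h1 : n ≤ d 1
      · have hle : Finsupp.single 1 n ≤ d := by simpa using h1
        have hw : expWt p q (d - Finsupp.single 1 n) + n * q = expWt p q d := by
          conv_rhs => rw [← tsub_add_cancel_of_le hle, expWt_add]
          simp [expWt]
        have hA : monomial (d - Finsupp.single 1 n) (1 : ℂ) ∈ wtLT p q (n * q) (k + 1) := by
          simp [monomial_mem_restrictSupport]; omega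
        obtain ⟨r, hr, B, e⟩ := ih _ (mul_mem_wtLT (v := 0) hA hg)
        refine ⟨-r, neg_mem hr, monomial (d - Finsupp.single 1 n) 1 - B, ?_⟩
        simp only []
        rw [monomial_eq_mul_sub hle g, e]; ring
      · exact ⟨monomial d 1, (monomial_mem_restrictSupport ℂ).2 (Or.inl (by simpa using h1)), 0,
          by simp⟩

lemma coeff_eq_zero_of_mem {s : Set (Fin 2 →₀ ℕ)} {G : MvPolynomial (Fin 2) ℂ}
    (h : G ∈ restrictSupport ℂ s) {d : Fin 2 →₀ ℕ} (hd : d ∉ s) : coeff d G = 0 := by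
  by_contra h'
  exact hd (mem_restrictSupport_iff_coeff.1 h d h')

/-- The remainder of the weighted division is unique. -/
theorem eq_zero_of_mem_boxPoly {p q m n : ℕ} {f g r A B : MvPolynomial (Fin 2) ℂ}
    (hf : f - monomial (Finsupp.single 0 m) 1 ∈ wtLT p q 0 (m * p))
    (hg : g - monomial (Finsupp.single 1 n) 1 ∈ wtLT p q 0 (n * q))
    (hr : r ∈ boxPoly m n) (h : r = A * f + B * g) : r = 0 := by
  obtain ⟨A', hA', c, rfl⟩ := exists_division_second hg A
  set B' := B + c * f with hB'
  have h' : r = A' * f + B' * g := by rw [h, hB']; ring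
  have key : ∀ k, A' ∈ wtLT p q (m * p) k → B' ∈ wtLT p q (n * q) k → A' = 0 ∧ B' = 0 := by
    intro k
    induction k with
    | zero =>
      intro h1 h2
      constructor
      · ext d
        exact coeff_eq_zero_of_mem h1 (by simp)
      · ext d
        exact coeff_eq_zero_of_mem h2 (by simp)
    | succ k ih =>
      intro h1 h2
      have e : r = A' * monomial (Finsupp.single 0 m) 1 + B' * monomial (Finsupp.single 1 n) 1 +
          (A' * (f - monomial (Finsupp.single 0 m) 1) +
            B' * (g - monomial (Finsupp.single 1 n) 1)) := by rw [h']; ring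
      have hlow := add_mem (mul_mem_wtLT (v := 0) h1 hf) (mul_mem_wtLT (v := 0) h2 hg)
      have hA0 : ∀ d, expWt p q d + m * p = k → coeff d A' = 0 := by
        intro d hd
        by_contra hne
        have hd1 : d 1 < n := mem_restrictSupport_iff_coeff.1 hA' d hne
        have h3 := congrArg (coeff (d + Finsupp.single 0 m)) e
        rw [coeff_add, coeff_add, coeff_mul_monomial, coeff_mul_monomial',
          coeff_eq_zero_of_mem hlow (by simp [expWt_add]; simp [expWt] at hd ⊢; omega),
          coeff_eq_zero_of_mem hr (by simp), if_neg (by simpa using hd1)] at h3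
        simp at h3
        exact hne h3.symm
      have hB0 : ∀ d, expWt p q d + n * q = k → coeff d B' = 0 := by
        intro d hd
        have h3 := congrArg (coeff (d + Finsupp.single 1 n)) e
        rw [coeff_add, coeff_add, coeff_mul_monomial, coeff_mul_monomial',
          coeff_eq_zero_of_mem hlow (by simp [expWt_add]; simp [expWt] at hd ⊢; omega),
          coeff_eq_zero_of_mem hr (by simp)] at h3
        have h4 : (if Finsupp.single 0 m ≤ d + Finsupp.single 1 n then
            coeff (d + Finsupp.single 1 n - Finsupp.single 0 m) A' * 1 else 0) = 0 := by
          split_ifs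
          · rw [coeff_eq_zero_of_mem hA' (by simp), zero_mul]
          · rfl
        rw [h4] at h3
        simpa using h3.symm
      refine ih (mem_restrictSupport_iff_coeff.2 fun d hd => ?_)
        (mem_restrictSupport_iff_coeff.2 fun d hd => ?_)
      · have := mem_restrictSupport_iff_coeff.1 h1 d hd
        simp only [Set.mem_ofPred_eq] at *
        have : expWt p q d + m * p ≠ k := fun h => hd (hA0 d h)
        omega
      · have := mem_restrictSupport_iff_coeff.1 h2 d hd
        simp only [Set.mem_ofPred_eq] at *
        have : expWt p q d + n * q ≠ k := fun h => hd (hB0 d h)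
        omega
  obtain ⟨k, hk⟩ := exists_mem_wtLT p q A'
  obtain ⟨k', hk'⟩ := exists_mem_wtLT p q B'
  obtain ⟨h1, h2⟩ := key (k + k' + m * p + n * q) (wtLT_mono (by omega) hk)
    (wtLT_mono (by omega) hk')
  rw [h', h1, h2]; simp

/-- A linear functional modulo `(f, g)` which, on monomials of weight at most that of the socle
monomial `X^m Y^n`, picks out the coefficient of `X^m Y^n`. -/
theorem exists_socle_functional {p q m n : ℕ} (hp : 0 < p) (hq : 0 < q)
    {f g : MvPolynomial (Fin 2) ℂ}
    (hf : f - monomial (Finsupp.single 0 (m + 1)) 1 ∈ wtLT p q 0 ((m + 1) * p))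
    (hg : g - monomial (Finsupp.single 1 (n + 1)) 1 ∈ wtLT p q 0 ((n + 1) * q))
    {t : Fin 2 →₀ ℕ} (ht0 : t 0 = m) (ht1 : t 1 = n) :
    ∃ lam : MvPolynomial (Fin 2) ℂ →ₗ[ℂ] ℂ, (∀ A, lam (A * f) = 0) ∧ (∀ A, lam (A * g) = 0) ∧
      lam (monomial t 1) = 1 ∧
      ∀ d, expWt p q d ≤ expWt p q t → d ≠ t → lam (monomial d 1) = 0 := by
  set N : Submodule ℂ (MvPolynomial (Fin 2) ℂ) :=
    (boxPoly (m + 1) (n + 1) ⊓ wtLT p q 0 (expWt p q t)) ⊔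
      (Ideal.span {f, g}).restrictScalars ℂ with hN
  have hfN : ∀ A, A * f ∈ N := fun A => Submodule.mem_sup_right
    (Ideal.mul_mem_left _ _ (Ideal.subset_span (by simp)))
  have hgN : ∀ A, A * g ∈ N := fun A => Submodule.mem_sup_right
    (Ideal.mul_mem_left _ _ (Ideal.subset_span (by simp)))
  have hlow : wtLT p q 0 (expWt p q t) ≤ N := by
    intro H hH
    obtain ⟨r, hr, A, -, B, -, rfl⟩ := exists_weighted_division hf hg _ H hH
    exact add_mem (add_mem (Submodule.mem_sup_left hr) (hfN A)) (hgN B)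
  have htN : monomial t (1 : ℂ) ∉ N := by
    intro h
    obtain ⟨r, hr, j, hj, e⟩ := Submodule.mem_sup.1 h
    obtain ⟨A, B, hAB⟩ := Ideal.mem_span_pair.1 hj
    have h0 : monomial t (1 : ℂ) - r = 0 := by
      refine eq_zero_of_mem_boxPoly (A := A) (B := B) hf hg (sub_mem ?_ hr.1) ?_
      · exact (monomial_mem_restrictSupport ℂ).2 (Or.inl ⟨by omega, by omega⟩)
      · rw [← e, hAB]; ring
    have h1 := congrArg (coeff t) h0
    rw [coeff_sub, coeff_eq_zero_of_mem hr.2 (by simp)] at h1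
    simp at h1
  obtain ⟨mu, hmu, hker⟩ := Submodule.exists_le_ker_of_notMem htN
  have hz : ∀ H ∈ N, ((mu (monomial t 1))⁻¹ • mu) H = 0 := fun H hH => by
    have : mu H = 0 := hker hH
    simp [this]
  refine ⟨(mu (monomial t 1))⁻¹ • mu, fun A => hz _ (hfN A), fun A => hz _ (hgN A), ?_, ?_⟩
  · simp [hmu]
  · intro d hd hne
    apply hz
    rcases hd.lt_or_eq with hd | hd
    · exact hlow ((monomial_mem_restrictSupport ℂ).2 (Or.inl (by simpa using hd)))
    by_cases h0 : m + 1 ≤ d 0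
    · have hle : Finsupp.single 0 (m + 1) ≤ d := Finsupp.single_le_iff.2 h0
      rw [monomial_eq_mul_sub hle f]
      refine sub_mem (hfN _) (hlow (mul_mem_wtLT (v := 0) (k := expWt p q t) (u := (m + 1) * p) ?_ hf))
      have hw : expWt p q (d - Finsupp.single 0 (m + 1)) + (m + 1) * p = expWt p q d := by
        conv_rhs => rw [← tsub_add_cancel_of_le hle, expWt_add]
        simp [expWt]
      exact (monomial_mem_restrictSupport ℂ).2 (Or.inl (by simp only [Set.mem_ofPred_eq]; omega))
    by_cases h1 : n + 1 ≤ d 1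
    · have hle : Finsupp.single 1 (n + 1) ≤ d := Finsupp.single_le_iff.2 h1
      rw [monomial_eq_mul_sub hle g]
      refine sub_mem (hgN _) (hlow (mul_mem_wtLT (v := 0) (k := expWt p q t) (u := (n + 1) * q) ?_ hg))
      have hw : expWt p q (d - Finsupp.single 1 (n + 1)) + (n + 1) * q = expWt p q d := by
        conv_rhs => rw [← tsub_add_cancel_of_le hle, expWt_add]
        simp [expWt]
      exact (monomial_mem_restrictSupport ℂ).2 (Or.inl (by simp only [Set.mem_ofPred_eq]; omega))
    · exfalso
      simp only [expWt, ht0, ht1] at hd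
      have a0 : d 0 * p ≤ m * p := Nat.mul_le_mul_right _ (by omega)
      have a1 : d 1 * q ≤ n * q := Nat.mul_le_mul_right _ (by omega)
      have b0 : d 0 = m := Nat.eq_of_mul_eq_mul_right hp (by omega)
      have b1 : d 1 = n := Nat.eq_of_mul_eq_mul_right hq (by omega)
      apply hne
      ext i
      fin_cases i
      · simp [b0, ht0]
      · simp [b1, ht1]

lemma socle_functional_mul_monomial {p q : ℕ} {t : Fin 2 →₀ ℕ}
    {lam : MvPolynomial (Fin 2) ℂ →ₗ[ℂ] ℂ} (h1 : lam (monomial t 1) = 1)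
    (h0 : ∀ d, expWt p q d ≤ expWt p q t → d ≠ t → lam (monomial d 1) = 0)
    {G : MvPolynomial (Fin 2) ℂ} {d : Fin 2 →₀ ℕ} (hd : d ≤ t)
    (hmax : ∀ e ∈ G.support, expWt p q e ≤ expWt p q d) :
    lam (G * monomial (t - d) 1) = coeff d G := by
  have hmon : ∀ (e : Fin 2 →₀ ℕ) (c : ℂ), monomial e c = c • monomial e 1 := fun e c => by
    rw [smul_monomial, smul_eq_mul, mul_one]
  have hwt : expWt p q d + expWt p q (t - d) = expWt p q t := by
    rw [← expWt_add, add_tsub_cancel_of_le hd]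
  conv_lhs => rw [G.as_sum, Finset.sum_mul, map_sum]
  rw [Finset.sum_eq_single d]
  · rw [monomial_mul, add_tsub_cancel_of_le hd, hmon, map_smul, h1]; simp
  · intro e he hne
    rw [monomial_mul, hmon, map_smul, h0, smul_zero]
    · rw [expWt_add]
      have := hmax e he
      omega
    · intro h
      apply hne
      rw [← add_tsub_cancel_of_le hd] at h
      exact add_right_cancel (h.trans (by rw [add_tsub_cancel_left]))
  · intro h
    rw [notMem_support_iff.1 h]; simp

/-- Duality for the complete intersection `(f, g)`: a nonzero functional on `ℂ[X, Y] / (f, g)`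
that vanishes on all polynomials of weight `< K` and on the multiples of `F` yields a nonzero `G`
with `G * F ∈ (f, g)`, with weight bounds on the cofactors. -/
theorem exists_mul_mem_of_functional {p q m n K : ℕ} (hp : 0 < p) (hq : 0 < q)
    {f g F : MvPolynomial (Fin 2) ℂ}
    (hf : f - monomial (Finsupp.single 0 (m + 1)) 1 ∈ wtLT p q 0 ((m + 1) * p))
    (hg : g - monomial (Finsupp.single 1 (n + 1)) 1 ∈ wtLT p q 0 ((n + 1) * q))
    (hF : F ∈ wtLT p q 0 (K + 1))
    (phi : MvPolynomial (Fin 2) ℂ →ₗ[ℂ] ℂ) (hphi : phi ≠ 0)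
    (hpf : ∀ A, phi (A * f) = 0) (hpg : ∀ A, phi (A * g) = 0) (hpF : ∀ A, phi (A * F) = 0)
    (hlow : ∀ A ∈ wtLT p q 0 K, phi A = 0) :
    ∃ G A B, G ≠ 0 ∧ G * F = A * f + B * g ∧
      A ∈ wtLT p q ((m + 1) * p) (m * p + n * q + 1) ∧
      B ∈ wtLT p q ((n + 1) * q) (m * p + n * q + 1) := by
  set t : Fin 2 →₀ ℕ := Finsupp.single 0 m + Finsupp.single 1 n with ht
  have ht0 : t 0 = m := by simp [ht]
  have ht1 : t 1 = n := by simp [ht]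
  have htw : expWt p q t = m * p + n * q := by rw [expWt, ht0, ht1]
  obtain ⟨lam, hlf, hlg, hl1, hl0⟩ := exists_socle_functional hp hq hf hg ht0 ht1
  have hbox : ∀ d : Fin 2 →₀ ℕ, d 0 < m + 1 ∧ d 1 < n + 1 → d ≤ t := by
    intro d hd i
    fin_cases i
    · change d 0 ≤ t 0; omega
    · change d 1 ≤ t 1; omega
  have hnd : ∀ G ∈ boxPoly (m + 1) (n + 1), G ≠ 0 → ∃ d ∈ G.support, d ≤ t ∧
      (∀ e ∈ G.support, expWt p q e ≤ expWt p q d) ∧ lam (G * monomial (t - d) 1) ≠ 0 := by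
    intro G hG hne
    obtain ⟨d, hd, hmax⟩ := Finset.exists_max_image G.support (expWt p q)
      (by simpa [Finset.nonempty_iff_ne_empty] using hne)
    have hdt := hbox d (mem_restrictSupport_iff_coeff.1 hG d (mem_support_iff.1 hd))
    refine ⟨d, hd, hdt, hmax, ?_⟩
    rw [socle_functional_mul_monomial hl1 hl0 hdt hmax]
    exact mem_support_iff.1 hd
  have hfin : {d : Fin 2 →₀ ℕ | d 0 < m + 1 ∧ d 1 < n + 1}.Finite :=
    (Set.finite_Iic t).subset hbox
  have : Finite {d : Fin 2 →₀ ℕ | d 0 < m + 1 ∧ d 1 < n + 1} := hfin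
  have : Module.Finite ℂ (boxPoly (m + 1) (n + 1)) :=
    Module.Finite.of_basis (basisRestrictSupport ℂ _)
  let W := boxPoly (m + 1) (n + 1)
  let T : W →ₗ[ℂ] Module.Dual ℂ W :=
    ((LinearMap.mul ℂ (MvPolynomial (Fin 2) ℂ)).compr₂ lam).domRestrict₁₂ W W
  have hdiv : ∀ H, ∃ r ∈ W, ∃ A B, H = r + A * f + B * g := by
    intro H
    obtain ⟨k, hk⟩ := exists_mem_wtLT p q H
    obtain ⟨r, hr, A, -, B, -, e⟩ := exists_weighted_division hf hg k H hk
    exact ⟨r, hr.1, A, B, e⟩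
  have hTinj : Function.Injective T := by
    rw [injective_iff_map_eq_zero]
    intro G hG
    by_contra hne
    obtain ⟨d, -, hdt, -, h⟩ := hnd G G.2 (by simpa using hne)
    have hm : monomial (t - d) (1 : ℂ) ∈ W := by
      refine (monomial_mem_restrictSupport ℂ).2 (Or.inl ⟨?_, ?_⟩)
      · simp only [Finsupp.tsub_apply]; omega
      · simp only [Finsupp.tsub_apply]; omega
    exact h (LinearMap.congr_fun hG ⟨_, hm⟩)
  have hTsurj : Function.Surjective T :=
    (LinearMap.injective_iff_surjective_of_finrank_eq_finrank
      (Subspace.dual_finrank_eq).symm).1 hTinj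
  obtain ⟨G, hG⟩ := hTsurj (phi.domRestrict W)
  have hrep : ∀ H, phi H = lam (G * H) := by
    intro H
    obtain ⟨r, hr, A, B, rfl⟩ := hdiv H
    have h1 : lam (G * r) = phi r := LinearMap.congr_fun hG ⟨r, hr⟩
    rw [mul_add, mul_add, ← mul_assoc, ← mul_assoc]
    simp only [map_add, hpf, hpg, hlf, hlg, h1]
  have hG0 : (G : MvPolynomial (Fin 2) ℂ) ≠ 0 := by
    intro h
    apply hphi
    ext1 d
    ext
    simp [hrep, h]
  obtain ⟨d, -, hdt, hmax, hd⟩ := hnd G G.2 hG0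
  have hwd : expWt p q d + expWt p q (t - d) = expWt p q t := by
    rw [← expWt_add, add_tsub_cancel_of_le hdt]
  have hK : K ≤ expWt p q (t - d) := by
    by_contra hlt
    rw [← hrep] at hd
    exact hd (hlow _ ((monomial_mem_restrictSupport ℂ).2 (Or.inl (by simpa using hlt))))
  have hGF : (G : MvPolynomial (Fin 2) ℂ) * F ∈ wtLT p q 0 (m * p + n * q + 1) := by
    refine mul_mem_restrictSupport (s := {e | expWt p q e ≤ expWt p q d})
      (mem_restrictSupport_iff_coeff.2 fun e he => hmax e (mem_support_iff.2 he)) hF ?_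
    intro e he e' he'
    simp only [Set.mem_ofPred_eq, expWt_add] at *
    omega
  obtain ⟨r, hr, A, hA, B, hB, e⟩ := exists_weighted_division hf hg _ _ hGF
  have hr0 : r = 0 := by
    by_contra hne
    obtain ⟨d, -, -, -, h⟩ := hnd r hr.1 hne
    apply h
    have e' : r * monomial (t - d) 1 = (G : MvPolynomial (Fin 2) ℂ) * (monomial (t - d) 1 * F) -
        monomial (t - d) 1 * A * f - monomial (t - d) 1 * B * g := by
      linear_combination (-monomial (t - d) (1 : ℂ)) * e
    rw [e', map_sub, map_sub, ← hrep, hpF, hlf, hlg]; simp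
  exact ⟨G, A, B, hG0, by rw [e, hr0]; ring, hA, hB⟩

open Topology in
/-- A map with injective strict derivative is locally antilipschitz. -/
theorem HasStrictFDerivAt.eventually_norm_sub_le {E F : Type*} [NormedAddCommGroup E]
    [NormedSpace ℂ E] [FiniteDimensional ℂ E] [NormedAddCommGroup F] [NormedSpace ℂ F]
    {f : E → F} {f' : E →L[ℂ] F} {a : E} (hf : HasStrictFDerivAt f f' a)
    (hinj : Function.Injective f') :
    ∃ K : ℝ, ∀ᶠ u in 𝓝 (a, a), ‖u.1 - u.2‖ ≤ K * ‖f u.1 - f u.2‖ := by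
  obtain ⟨K, hK, hanti⟩ := (f' : E →ₗ[ℂ] F).exists_antilipschitzWith
    (LinearMap.ker_eq_bot.2 hinj)
  have hK' : (0 : ℝ) < K := hK
  refine ⟨2 * K, ?_⟩
  have h := hf.isLittleO.def (c := 1 / (2 * K)) (by positivity)
  filter_upwards [h] with u hu
  have h1 : ‖u.1 - u.2‖ ≤ K * ‖f' (u.1 - u.2)‖ := by
    simpa using hanti.le_mul_dist (u.1 - u.2) 0
  have h2 : ‖f' (u.1 - u.2)‖ ≤ ‖f u.1 - f u.2‖ + 1 / (2 * K) * ‖u.1 - u.2‖ := by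
    have := norm_sub_norm_le (f' (u.1 - u.2)) (f u.1 - f u.2)
    rw [norm_sub_rev (f' (u.1 - u.2)) (f u.1 - f u.2)] at this
    linarith
  have h3 : K * ‖f' (u.1 - u.2)‖ ≤ K * (‖f u.1 - f u.2‖ + 1 / (2 * K) * ‖u.1 - u.2‖) := by
    gcongr
  have h4 : (K : ℝ) * (‖f u.1 - f u.2‖ + 1 / (2 * K) * ‖u.1 - u.2‖) =
      K * ‖f u.1 - f u.2‖ + ‖u.1 - u.2‖ / 2 := by field_simp
  linarith

/-- The differential of the polynomial function of `G` at `z`. -/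
noncomputable def evalDeriv (G : MvPolynomial (Fin 2) ℂ) (z : Fin 2 → ℂ) :
    (Fin 2 → ℂ) →L[ℂ] ℂ :=
  ∑ i, eval z (pderiv i G) • ContinuousLinearMap.proj i

lemma evalDeriv_apply (G : MvPolynomial (Fin 2) ℂ) (z u : Fin 2 → ℂ) :
    evalDeriv G z u = eval z (pderiv 0 G) * u 0 + eval z (pderiv 1 G) * u 1 := by
  simp [evalDeriv, Fin.sum_univ_two]

lemma MvPolynomial.hasStrictFDerivAt_eval (G : MvPolynomial (Fin 2) ℂ) (z : Fin 2 → ℂ) :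
    HasStrictFDerivAt (fun z => eval z G) (evalDeriv G z) z := by
  induction G using MvPolynomial.induction_on with
  | C a =>
    have h : evalDeriv (C a) z = 0 := by ext; simp [evalDeriv]
    simpa only [eval_C, h] using hasStrictFDerivAt_const a z
  | add G H hG hH =>
    have h : evalDeriv (G + H) z = evalDeriv G z + evalDeriv H z := by
      ext u; simp [evalDeriv_apply]; ring
    simpa only [eval_add, h] using hG.fun_add hH
  | mul_X G i hG =>
    have hX := ContinuousLinearMap.hasStrictFDerivAt (x := z)
      (ContinuousLinearMap.proj (R := ℂ) (φ := fun _ : Fin 2 => ℂ) i)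
    have h : evalDeriv (G * X i) z = eval z G • ContinuousLinearMap.proj i +
        z i • evalDeriv G z := by
      ext u
      fin_cases i <;> simp [evalDeriv_apply, pderiv_X] <;> ring
    simp only [eval_mul, eval_X, h]
    exact hG.fun_mul hX

open Topology in
/-- Near a transversal common zero of `f` and `g`, every polynomial vanishing there is bounded
by `f` and `g`. -/
theorem eventually_norm_le_of_transversal {f g A : MvPolynomial (Fin 2) ℂ} {z : Fin 2 → ℂ}
    (hf : eval z f = 0) (hg : eval z g = 0) (hA : eval z A = 0)
    (hdet : eval z (pderiv 0 f) * eval z (pderiv 1 g) -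
      eval z (pderiv 1 f) * eval z (pderiv 0 g) ≠ 0) :
    ∃ K : ℝ, ∀ᶠ w in 𝓝 z, ‖eval w A‖ ≤ K * max ‖eval w f‖ ‖eval w g‖ := by
  have h1 := (f.hasStrictFDerivAt_eval z).prodMk (g.hasStrictFDerivAt_eval z)
  obtain ⟨K, hK⟩ := h1.eventually_norm_sub_le (by
    rw [injective_iff_map_eq_zero]
    intro u hu
    have h0 := congrArg Prod.fst hu
    have h1 := congrArg Prod.snd hu
    simp only [ContinuousLinearMap.prod_apply, evalDeriv_apply, Prod.fst_zero,
      Prod.snd_zero] at h0 h1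
    ext i
    apply mul_left_cancel₀ hdet
    fin_cases i
    · change _ * u 0 = _ * 0
      linear_combination eval z (pderiv 1 g) * h0 - eval z (pderiv 1 f) * h1
    · change _ * u 1 = _ * 0
      linear_combination eval z (pderiv 0 f) * h1 - eval z (pderiv 0 g) * h0)
  obtain ⟨K', hK'pos, hK'⟩ := (A.hasStrictFDerivAt_eval z).hasFDerivAt.isBigO_sub.exists_pos
  refine ⟨K' * K, ?_⟩
  have h3 : ∀ᶠ w in 𝓝 z, ‖w - z‖ ≤ K * max ‖eval w f‖ ‖eval w g‖ := by
    have : Filter.Tendsto (fun w : Fin 2 → ℂ => (w, z)) (𝓝 z) (𝓝 (z, z)) :=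
      Filter.Tendsto.prodMk_nhds Filter.tendsto_id tendsto_const_nhds
    filter_upwards [this.eventually hK] with w hw
    simpa [hf, hg, Prod.norm_def] using hw
  filter_upwards [h3, hK'.bound] with w hw hw'
  rw [hA, sub_zero] at hw'
  calc _ ≤ K' * ‖w - z‖ := hw'
    _ ≤ K' * (K * max ‖eval w f‖ ‖eval w g‖) := by gcongr
    _ = _ := by ring

/-- A weighted growth estimate. -/
lemma exists_eval_bound {p q k : ℕ} {H : MvPolynomial (Fin 2) ℂ} (hH : H ∈ wtLT p q 0 k) :
    ∃ C : ℝ, 0 ≤ C ∧ ∀ (ρ : ℝ) (z : Fin 2 → ℂ), 1 ≤ ρ → ‖z 0‖ ≤ ρ ^ p → ‖z 1‖ ≤ ρ ^ q →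
      ‖eval z H‖ * ρ ≤ C * ρ ^ k := by
  refine ⟨∑ d ∈ H.support, ‖coeff d H‖, by positivity, fun ρ z hρ h0 h1 => ?_⟩
  rw [eval_eq', Finset.sum_mul]
  have hρ0 : 0 ≤ ρ := by linarith
  calc _ ≤ (∑ d ∈ H.support, ‖coeff d H * ∏ i, z i ^ d i‖) * ρ := by
        gcongr; exact norm_sum_le _ _
    _ = ∑ d ∈ H.support, ‖coeff d H * ∏ i, z i ^ d i‖ * ρ := by rw [Finset.sum_mul]
    _ ≤ _ := by
      refine Finset.sum_le_sum fun d hd => ?_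
      have hw := mem_restrictSupport_iff_coeff.1 hH d (mem_support_iff.1 hd)
      simp only [Set.mem_ofPred_eq, expWt, add_zero] at hw
      rw [Fin.prod_univ_two, norm_mul, norm_mul, norm_pow, norm_pow]
      calc ‖coeff d H‖ * (‖z 0‖ ^ d 0 * ‖z 1‖ ^ d 1) * ρ
          ≤ ‖coeff d H‖ * ((ρ ^ p) ^ d 0 * (ρ ^ q) ^ d 1) * ρ := by gcongr
        _ = ‖coeff d H‖ * ρ ^ (d 0 * p + d 1 * q + 1) := by ring
        _ ≤ _ := by gcongr; omega

lemma exists_weighted_radius {p q : ℕ} (hp : p ≠ 0) (hq : q ≠ 0) (z : Fin 2 → ℂ) :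
    ∃ ρ : ℝ, 1 ≤ ρ ∧ ‖z 0‖ ≤ ρ ^ p ∧ ‖z 1‖ ≤ ρ ^ q ∧
      (ρ = 1 ∨ ‖z 0‖ = ρ ^ p ∨ ‖z 1‖ = ρ ^ q) := by
  have e0 : (‖z 0‖ ^ (p : ℝ)⁻¹) ^ p = ‖z 0‖ := Real.rpow_inv_natCast_pow (norm_nonneg _) hp
  have e1 : (‖z 1‖ ^ (q : ℝ)⁻¹) ^ q = ‖z 1‖ := Real.rpow_inv_natCast_pow (norm_nonneg _) hq
  set a := ‖z 0‖ ^ (p : ℝ)⁻¹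
  set b := ‖z 1‖ ^ (q : ℝ)⁻¹
  have ha : 0 ≤ a := by positivity
  have hb : 0 ≤ b := by positivity
  refine ⟨max 1 (max a b), le_max_left _ _, ?_, ?_, ?_⟩
  · rw [← e0]; gcongr; exact (le_max_left _ _).trans (le_max_right _ _)
  · rw [← e1]; gcongr; exact (le_max_right _ _).trans (le_max_right _ _)
  · rw [← e0, ← e1]
    rcases max_choice 1 (max a b) with h | h
    · exact Or.inl h
    · rw [h]
      rcases max_choice a b with h' | h' <;> simp [h']

/-- A polynomial dominated by another one is a constant multiple of it. -/
theorem Polynomial.exists_eq_C_mul_of_norm_le (D : Polynomial ℂ) :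
    ∀ (N : Polynomial ℂ) (K : ℝ), (∀ x, ‖N.eval x‖ ≤ K * ‖D.eval x‖) → ∃ c : ℂ, N = C c * D := by
  induction h : D.natDegree generalizing D with
  | zero =>
    intro N K hN
    obtain ⟨d, rfl⟩ : ∃ d, D = C d := ⟨_, eq_C_of_natDegree_eq_zero h⟩
    by_cases hd : d = 0
    · refine ⟨0, ?_⟩
      refine Polynomial.funext fun x => ?_
      simpa [hd] using hN x
    have hNdeg : N.natDegree = 0 := by
      by_contra hne
      have ht := N.tendsto_norm_atTop (Polynomial.natDegree_pos_iff_degree_pos.1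
        (Nat.pos_of_ne_zero hne)) tendsto_norm_cocompact_atTop
      obtain ⟨x, hx⟩ := (ht.eventually (Filter.eventually_gt_atTop (K * ‖d‖))).exists
      have := hN x
      simp only [eval_C] at this
      linarith
    refine ⟨N.coeff 0 / d, ?_⟩
    rw [← C_mul, div_mul_cancel₀ _ hd]
    exact eq_C_of_natDegree_eq_zero hNdeg
  | succ n ih =>
    intro N K hN
    obtain ⟨a, ha⟩ := IsAlgClosed.exists_root D (by
      intro h0
      have := natDegree_eq_zero_iff_degree_le_zero.2 h0.le
      omega)
    have hNa : N.IsRoot a := by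
      have := hN a
      rw [ha.eq_zero, norm_zero, mul_zero] at this
      exact norm_le_zero_iff.1 this
    obtain ⟨D', rfl⟩ := dvd_iff_isRoot.2 ha
    obtain ⟨N', rfl⟩ := dvd_iff_isRoot.2 hNa
    have hD' : D' ≠ 0 := by rintro rfl; simp at h
    rw [natDegree_mul (X_sub_C_ne_zero a) hD', natDegree_X_sub_C] at h
    obtain ⟨c, hc⟩ := ih D' (by omega) N' K (by
      have hcl : IsClosed {x : ℂ | ‖N'.eval x‖ ≤ K * ‖D'.eval x‖} := by
        apply isClosed_le <;> fun_prop
      have hsub : ({a}ᶜ : Set ℂ) ⊆ {x : ℂ | ‖N'.eval x‖ ≤ K * ‖D'.eval x‖} := by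
        intro x hx
        have h1 := hN x
        simp only [eval_mul, eval_sub, eval_X, eval_C, norm_mul] at h1
        have h2 : 0 < ‖x - a‖ := norm_pos_iff.2 (sub_ne_zero.2 hx)
        refine le_of_mul_le_mul_left ?_ h2
        linarith
      have hd : Dense ({a}ᶜ : Set ℂ) := dense_compl_singleton a
      have := hd.closure_eq ▸ hcl.closure_subset_iff.2 hsub
      exact fun x => this (Set.mem_univ x))
    exact ⟨c, by rw [hc]; ring⟩

/-- `F` is a normed polynomial of type `p, q`: its weighted leading form is `Y^p - X^q`. -/
def IsWeierstrass (p q : ℕ) (F : MvPolynomial (Fin 2) ℂ) : Prop :=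
  F - (X 1 ^ p - X 0 ^ q) ∈ wtLT p q 0 (p * q)

/-- On the curve `F = 0`, polynomials of smaller weight than `∂F/∂Y` are negligible
at infinity. -/
theorem exists_radius_norm_le {p q n : ℕ} (hpn : p = n + 1) {F A : MvPolynomial (Fin 2) ℂ}
    (hF : IsWeierstrass p q F)
    (hg : pderiv 1 F - C (p : ℂ) * X 1 ^ n ∈ wtLT p q 0 (n * q))
    (hA : A ∈ wtLT p q 0 (n * q)) {c : ℝ} (hc : 0 < c) :
    ∃ R : ℝ, 1 ≤ R ∧ ∀ (ρ : ℝ) (z : Fin 2 → ℂ), R ≤ ρ → ‖z 0‖ ≤ ρ ^ p → ‖z 1‖ ≤ ρ ^ q →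
      (‖z 0‖ = ρ ^ p ∨ ‖z 1‖ = ρ ^ q) → eval z F = 0 →
      ‖eval z A‖ ≤ c * ‖eval z (pderiv 1 F)‖ ∧ eval z (pderiv 1 F) ≠ 0 := by
  obtain ⟨C₁, hC₁, h₁⟩ := exists_eval_bound hF
  obtain ⟨C₂, hC₂, h₂⟩ := exists_eval_bound hg
  obtain ⟨C₃, hC₃, h₃⟩ := exists_eval_bound hA
  refine ⟨1 + 2 * C₁ + 2 ^ (n + 1) * C₂ + C₃ * 2 ^ (n + 1) / c, ?_, ?_⟩
  · have : 0 ≤ 2 * C₁ + 2 ^ (n + 1) * C₂ + C₃ * 2 ^ (n + 1) / c := by positivity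
    linarith
  intro ρ z hR h0 h1 hor hz
  have b1 : 0 ≤ 2 ^ (n + 1) * C₂ := by positivity
  have b2 : 0 ≤ C₃ * 2 ^ (n + 1) / c := by positivity
  have hρ : 1 ≤ ρ := by linarith
  have hρ0 : 0 < ρ := by linarith
  have k₁ := h₁ ρ z hρ h0 h1
  have k₂ := h₂ ρ z hρ h0 h1
  have k₃ := h₃ ρ z hρ h0 h1
  have eT : ρ ^ (p * q) = (ρ ^ q) ^ p := by rw [← pow_mul, mul_comm]
  have eT' : ρ ^ (n * q) = (ρ ^ q) ^ n := by rw [← pow_mul, mul_comm]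
  have eX : (ρ ^ p) ^ q = (ρ ^ q) ^ p := by rw [← pow_mul, ← pow_mul, mul_comm]
  rw [eT] at k₁
  rw [eT'] at k₂ k₃
  have hT0 : 0 < ρ ^ q := by positivity
  set T := ρ ^ q
  simp only [eval_sub, eval_mul, eval_C, eval_pow, eval_X, hz] at k₁ k₂
  have k₁' : ‖z 1 ^ p - z 0 ^ q‖ ≤ T ^ p / 2 := by
    have h : ‖z 1 ^ p - z 0 ^ q‖ * ρ ≤ T ^ p / 2 * ρ := by
      rw [zero_sub, norm_neg] at k₁
      have : C₁ * T ^ p ≤ (ρ / 2) * T ^ p := by gcongr; linarith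
      linarith
    exact le_of_mul_le_mul_right h hρ0
  have hy : T ^ p / 2 ≤ ‖z 1‖ ^ p := by
    rcases hor with h | h
    · have h3 : ‖z 0 ^ q‖ = T ^ p := by rw [norm_pow, h, eX]
      have h4 := norm_sub_norm_le (z 0 ^ q) (z 1 ^ p)
      rw [norm_sub_rev, h3, norm_pow (z 1)] at h4
      linarith
    · rw [h]; linarith [pow_pos hT0 p]
  have hy' : T / 2 ≤ ‖z 1‖ := by
    by_contra hlt
    have h5 : ‖z 1‖ ^ p < (T / 2) ^ p :=
      pow_lt_pow_left₀ (not_le.1 hlt) (norm_nonneg _) (by omega)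
    have h6 : (T / 2) ^ p ≤ T ^ p / 2 := by
      rw [div_pow]
      gcongr
      exact le_self_pow₀ (by norm_num) (by omega)
    linarith
  have hTn : 0 < T ^ n := by positivity
  have hyn : T ^ n / 2 ^ n ≤ ‖(p : ℂ) * z 1 ^ n‖ := by
    rw [norm_mul, norm_pow, ← div_pow]
    have hp1 : (1 : ℝ) ≤ ‖(p : ℂ)‖ := by
      rw [Complex.norm_natCast]; exact_mod_cast (by omega : 1 ≤ p)
    calc (T / 2) ^ n ≤ ‖z 1‖ ^ n := by gcongr
      _ ≤ _ := le_mul_of_one_le_left (by positivity) hp1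
  have k₂' : ‖eval z (pderiv 1 F) - p * z 1 ^ n‖ ≤ T ^ n / 2 ^ (n + 1) := by
    have h : ‖eval z (pderiv 1 F) - p * z 1 ^ n‖ * ρ ≤ T ^ n / 2 ^ (n + 1) * ρ := by
      refine k₂.trans ?_
      rw [div_mul_eq_mul_div, le_div_iff₀ (by positivity)]
      have : T ^ n * (2 ^ (n + 1) * C₂) ≤ T ^ n * ρ := by gcongr; linarith
      linarith
    exact le_of_mul_le_mul_right h hρ0
  have hgl : T ^ n / 2 ^ (n + 1) ≤ ‖eval z (pderiv 1 F)‖ := by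
    have h7 := norm_sub_norm_le ((p : ℂ) * z 1 ^ n) (eval z (pderiv 1 F))
    rw [norm_sub_rev] at h7
    have h8 : T ^ n / 2 ^ n = 2 * (T ^ n / 2 ^ (n + 1)) := by rw [pow_succ]; field_simp
    linarith
  have hpos : 0 < T ^ n / 2 ^ (n + 1) := by positivity
  refine ⟨?_, norm_pos_iff.1 (by linarith)⟩
  have h9 : ‖eval z A‖ ≤ c * (T ^ n / 2 ^ (n + 1)) := by
    have h : ‖eval z A‖ * ρ ≤ c * (T ^ n / 2 ^ (n + 1)) * ρ := by
      refine k₃.trans ?_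
      have h10 : C₃ * 2 ^ (n + 1) / c ≤ ρ := by linarith
      rw [div_le_iff₀ hc] at h10
      have h11 : c * (T ^ n / 2 ^ (n + 1)) * ρ = (ρ * c) * T ^ n / 2 ^ (n + 1) := by ring
      rw [h11, le_div_iff₀ (by positivity)]
      have : (C₃ * 2 ^ (n + 1)) * T ^ n ≤ (ρ * c) * T ^ n := by gcongr
      linarith
    exact le_of_mul_le_mul_right h hρ0
  exact h9.trans (by gcongr)

open Topology in
lemma eventually_norm_le_of_ne_zero (A : MvPolynomial (Fin 2) ℂ) {g : MvPolynomial (Fin 2) ℂ}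
    {z : Fin 2 → ℂ} (hg : eval z g ≠ 0) :
    ∃ K : ℝ, ∀ᶠ w in 𝓝 z, ‖eval w A‖ ≤ K * ‖eval w g‖ := by
  refine ⟨‖eval z A‖ / ‖eval z g‖ + 1, ?_⟩
  have hg' : 0 < ‖eval z g‖ := norm_pos_iff.2 hg
  have h : ‖eval z A‖ < (‖eval z A‖ / ‖eval z g‖ + 1) * ‖eval z g‖ := by
    rw [add_mul, div_mul_cancel₀ _ hg'.ne']; linarith
  have cA := (MvPolynomial.continuous_eval A).norm.continuousAt (x := z)
  have cg := ((MvPolynomial.continuous_eval g).norm.const_mul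
    (‖eval z A‖ / ‖eval z g‖ + 1)).continuousAt (x := z)
  filter_upwards [cA.eventually_lt cg h] with w hw using hw.le

open Topology in
/-- A polynomial vector field `(A, B)` tangent to a curve and vanishing at its nodes is a bounded
multiple of the Hamiltonian field, locally on the curve. -/
theorem eventually_norm_le_on_curve {F f g A B : MvPolynomial (Fin 2) ℂ}
    (hAB : ∀ z, eval z F = 0 → eval z A * eval z f + eval z B * eval z g = 0)
    {z : Fin 2 → ℂ}
    (hz : eval z f = 0 → eval z g = 0 → eval z A = 0 ∧ eval z B = 0 ∧
      eval z (pderiv 0 f) * eval z (pderiv 1 g) - eval z (pderiv 1 f) * eval z (pderiv 0 g) ≠ 0) :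
    ∃ K : ℝ, ∀ᶠ w in 𝓝 z, eval w F = 0 → ‖eval w A‖ ≤ K * ‖eval w g‖ := by
  have hn : ∀ w, eval w F = 0 → ‖eval w A‖ * ‖eval w f‖ = ‖eval w B‖ * ‖eval w g‖ := by
    intro w hw
    rw [← norm_mul, ← norm_mul, eq_neg_of_add_eq_zero_left (hAB w hw), norm_neg]
  have hcancel : ∀ (w : Fin 2 → ℂ) (K : ℝ), eval w F = 0 → eval w f ≠ 0 →
      ‖eval w B‖ ≤ K * ‖eval w f‖ → ‖eval w A‖ ≤ K * ‖eval w g‖ := by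
    intro w K hw hf h
    refine le_of_mul_le_mul_right ?_ (norm_pos_iff.2 hf)
    rw [hn w hw]
    calc _ ≤ K * ‖eval w f‖ * ‖eval w g‖ := by gcongr
      _ = _ := by ring
  by_cases hg : eval z g = 0
  · by_cases hf : eval z f = 0
    · obtain ⟨hA, hB, hdet⟩ := hz hf hg
      obtain ⟨K, hK⟩ := eventually_norm_le_of_transversal hf hg hA hdet
      obtain ⟨K', hK'⟩ := eventually_norm_le_of_transversal hf hg hB hdet
      refine ⟨max K K', ?_⟩
      filter_upwards [hK, hK'] with w hw hw' hwF
      rcases le_total ‖eval w f‖ ‖eval w g‖ with h | h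
      · rw [max_eq_right h] at hw
        exact hw.trans (by gcongr; exact le_max_left _ _)
      · rw [max_eq_left h] at hw hw'
        by_cases hwf : eval w f = 0
        · rw [hwf, norm_zero] at h hw
          rw [le_antisymm h (norm_nonneg _)]
          simpa using hw
        · exact hcancel w _ hwF hwf (hw'.trans (by gcongr; exact le_max_right _ _))
    · obtain ⟨K, hK⟩ := eventually_norm_le_of_ne_zero B hf
      refine ⟨K, ?_⟩
      have := (MvPolynomial.continuous_eval f).continuousAt.eventually_ne hf
      filter_upwards [hK, this] with w hw hwf hwF using hcancel w K hwF hwf hw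
  · obtain ⟨K, hK⟩ := eventually_norm_le_of_ne_zero A hg
    exact ⟨K, hK.mono fun w hw _ => hw⟩

lemma IsCompact.exists_norm_le_on_curve {F g A : MvPolynomial (Fin 2) ℂ}
    {S : Set (Fin 2 → ℂ)} (hS : IsCompact S)
    (h : ∀ z, eval z F = 0 →
      ∃ K : ℝ, ∀ᶠ w in nhds z, eval w F = 0 → ‖eval w A‖ ≤ K * ‖eval w g‖) :
    ∃ K : ℝ, ∀ w ∈ S, eval w F = 0 → ‖eval w A‖ ≤ K * ‖eval w g‖ := by
  refine hS.induction_on (p := fun s => ∃ K : ℝ, ∀ w ∈ s, eval w F = 0 →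
    ‖eval w A‖ ≤ K * ‖eval w g‖) ⟨0, by simp⟩ ?_ ?_ ?_
  · rintro s t hst ⟨K, hK⟩
    exact ⟨K, fun w hw => hK w (hst hw)⟩
  · rintro s t ⟨K, hK⟩ ⟨K', hK'⟩
    refine ⟨max K K', fun w hw hwF => ?_⟩
    rcases hw with hw | hw
    · exact (hK w hw hwF).trans (by gcongr; exact le_max_left _ _)
    · exact (hK' w hw hwF).trans (by gcongr; exact le_max_right _ _)
  · intro z _
    by_cases hz : eval z F = 0
    · obtain ⟨K, hK⟩ := h z hz
      exact ⟨_, mem_nhdsWithin_of_mem_nhds hK, K, fun w hw => hw⟩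
    · exact ⟨_, mem_nhdsWithin_of_mem_nhds
        ((MvPolynomial.continuous_eval F).continuousAt.eventually_ne hz), 0,
        fun w hw hwF => absurd hwF hw⟩

/-- View a polynomial in `X, Y` as a polynomial in `Y` over `ℂ[X]`. -/
noncomputable def toPoly : MvPolynomial (Fin 2) ℂ →ₐ[ℂ] Polynomial (Polynomial ℂ) :=
  aeval ![Polynomial.C Polynomial.X, Polynomial.X]

/-- The specialization of a polynomial in `X, Y` at `X = x`. -/
noncomputable def fiberPoly (G : MvPolynomial (Fin 2) ℂ) (x : ℂ) : Polynomial ℂ :=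
  (toPoly G).map (Polynomial.evalRingHom x)

lemma eval_fiberPoly (G : MvPolynomial (Fin 2) ℂ) (x y : ℂ) :
    (fiberPoly G x).eval y = eval ![x, y] G := by
  unfold fiberPoly
  induction G using MvPolynomial.induction_on with
  | C a => simp [toPoly, Polynomial.algebraMap_apply]
  | add G H hG hH => simp only [map_add, Polynomial.map_add, Polynomial.eval_add, hG, hH]
  | mul_X G i hG =>
    simp only [map_mul, Polynomial.map_mul, Polynomial.eval_mul, hG]
    fin_cases i <;> simp [toPoly]

lemma derivative_toPoly (G : MvPolynomial (Fin 2) ℂ) :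
    Polynomial.derivative (toPoly G) = toPoly (pderiv 1 G) := by
  induction G using MvPolynomial.induction_on with
  | C a => simp [toPoly, Polynomial.algebraMap_apply]
  | add G H hG hH => simp only [map_add, hG, hH]
  | mul_X G i hG =>
    rw [pderiv_mul, map_mul, Polynomial.derivative_mul, hG, map_add, map_mul, map_mul]
    fin_cases i <;> simp [toPoly]

lemma degree_toPoly_lt {N : ℕ} {H : MvPolynomial (Fin 2) ℂ}
    (hH : H ∈ restrictSupport ℂ {d : Fin 2 →₀ ℕ | d 1 < N}) : (toPoly H).degree < N := by
  rw [← Polynomial.mem_degreeLT, H.as_sum, map_sum]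
  refine Submodule.sum_mem _ fun d hd => ?_
  have hd1 : d 1 < N := mem_restrictSupport_iff_coeff.1 hH d (mem_support_iff.1 hd)
  rw [Polynomial.mem_degreeLT]
  have e : toPoly (monomial d (coeff d H)) =
      Polynomial.C (Polynomial.C (coeff d H) * Polynomial.X ^ d 0) * Polynomial.X ^ d 1 := by
    simp [toPoly, aeval_monomial, Finsupp.prod_fintype, Polynomial.algebraMap_apply, mul_assoc]
  rw [e]
  exact (Polynomial.degree_C_mul_X_pow_le _ _).trans_lt (by exact_mod_cast hd1)

lemma wtLT_le_degree_lt {p q k : ℕ} (hk : k ≤ p * q) :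
    wtLT p q 0 k ≤ restrictSupport ℂ {d : Fin 2 →₀ ℕ | d 1 < p} := by
  refine restrictSupport_mono _ fun d hd => ?_
  simp only [Set.mem_ofPred_eq, expWt] at *
  by_contra h
  have : p * q ≤ d 1 * q := Nat.mul_le_mul_right _ (by omega)
  omega

lemma IsWeierstrass.monic_toPoly {p q : ℕ} (hp : 0 < p) {F : MvPolynomial (Fin 2) ℂ}
    (hF : IsWeierstrass p q F) : (toPoly F).Monic ∧ (toPoly F).natDegree = p := by
  have h1 := degree_toPoly_lt (wtLT_le_degree_lt le_rfl hF)
  have e : toPoly F = Polynomial.X ^ p + (toPoly (F - (X 1 ^ p - X 0 ^ q)) -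
      Polynomial.C (Polynomial.X ^ q)) := by
    simp [toPoly]
    ring
  have h2 : (toPoly (F - (X 1 ^ p - X 0 ^ q)) -
      Polynomial.C (Polynomial.X ^ q)).degree < (p : WithBot ℕ) :=
    (Polynomial.degree_sub_le _ _).trans_lt (max_lt h1 (Polynomial.degree_C_le.trans_lt
      (by exact_mod_cast hp)))
  rw [e]
  refine ⟨Polynomial.monic_X_pow_add h2, ?_⟩
  rw [Polynomial.natDegree_add_eq_left_of_degree_lt (by simpa using h2),
    Polynomial.natDegree_X_pow]

lemma IsWeierstrass.monic_fiberPoly {p q : ℕ} (hp : 0 < p) {F : MvPolynomial (Fin 2) ℂ}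
    (hF : IsWeierstrass p q F) (x : ℂ) :
    (fiberPoly F x).Monic ∧ (fiberPoly F x).natDegree = p := by
  obtain ⟨h1, h2⟩ := hF.monic_toPoly hp
  exact ⟨h1.map _, by rw [fiberPoly, h1.natDegree_map, h2]⟩

/-- The product of `H` over the fiber of the curve above `x` is polynomial in `x`. -/
theorem IsWeierstrass.exists_fiber_prod {p q : ℕ} (hp : 0 < p) {F : MvPolynomial (Fin 2) ℂ}
    (hF : IsWeierstrass p q F) (H : MvPolynomial (Fin 2) ℂ) :
    ∃ N : Polynomial ℂ, ∀ x, N.eval x =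
      ((fiberPoly F x).roots.map fun y => eval ![x, y] H).prod := by
  refine ⟨Polynomial.resultant (toPoly F) (toPoly H) p (toPoly H).natDegree, fun x => ?_⟩
  obtain ⟨h1, h2⟩ := hF.monic_fiberPoly hp x
  have h3 := Polynomial.resultant_eq_prod_eval (fiberPoly F x) (fiberPoly H x)
    (toPoly H).natDegree Polynomial.natDegree_map_le (IsAlgClosed.splits _)
  rw [h2, h1.leadingCoeff, one_pow, one_mul, fiberPoly, fiberPoly,
    Polynomial.resultant_map_map] at h3
  rw [← Polynomial.coe_evalRingHom, h3]
  congr 1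
  exact Multiset.map_congr rfl fun y _ => eval_fiberPoly H x y

lemma Multiset.norm_prod_map_le (s : Multiset ℂ) (a b : ℂ → ℂ) {K : ℝ} (hK : 0 ≤ K)
    (h : ∀ y ∈ s, ‖a y‖ ≤ K * ‖b y‖) :
    ‖(s.map a).prod‖ ≤ K ^ s.card * ‖(s.map b).prod‖ := by
  induction s using Multiset.induction_on with
  | empty => simp
  | cons y s ih =>
    have h1 := h y (Multiset.mem_cons_self y s)
    have h2 := ih fun y hy => h y (Multiset.mem_cons_of_mem hy)
    simp only [Multiset.map_cons, Multiset.prod_cons, norm_mul, Multiset.card_cons]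
    calc _ ≤ (K * ‖b y‖) * (K ^ s.card * ‖(s.map b).prod‖) := by gcongr
      _ = _ := by ring

/-- On the curve `F = 0`, polynomials of smaller weight than `∂F/∂Y` are negligible
above large `x`. -/
lemma IsWeierstrass.exists_radius {p q n : ℕ} (hpn : p = n + 1) (hq : q ≠ 0)
    {F A : MvPolynomial (Fin 2) ℂ} (hF : IsWeierstrass p q F)
    (hg : pderiv 1 F - C (p : ℂ) * X 1 ^ n ∈ wtLT p q 0 (n * q))
    (hA : A ∈ wtLT p q 0 (n * q)) {c : ℝ} (hc : 0 < c) :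
    ∃ R : ℝ, ∀ z : Fin 2 → ℂ, R < ‖z 0‖ → eval z F = 0 →
      ‖eval z A‖ ≤ c * ‖eval z (pderiv 1 F)‖ ∧ eval z (pderiv 1 F) ≠ 0 := by
  obtain ⟨R, hR1, hR⟩ := exists_radius_norm_le hpn hF hg hA hc
  refine ⟨R ^ p, fun z hz hzF => ?_⟩
  obtain ⟨ρ, hρ1, h0, h1, hor⟩ := exists_weighted_radius (by omega : p ≠ 0) hq z
  have hRρ : R < ρ := lt_of_pow_lt_pow_left₀ p (by linarith) (hz.trans_le h0)
  exact hR ρ z hRρ.le h0 h1 (hor.resolve_left (by linarith)) hzF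

theorem IsWeierstrass.exists_norm_le_on_curve {p q n : ℕ} (hpn : p = n + 1) (hq : q ≠ 0)
    {F A : MvPolynomial (Fin 2) ℂ} (hF : IsWeierstrass p q F)
    (hg : pderiv 1 F - C (p : ℂ) * X 1 ^ n ∈ wtLT p q 0 (n * q))
    (hA : A ∈ wtLT p q 0 (n * q))
    (hloc : ∀ z, eval z F = 0 → ∃ K : ℝ, ∀ᶠ w in nhds z, eval w F = 0 →
      ‖eval w A‖ ≤ K * ‖eval w (pderiv 1 F)‖) :
    ∃ K : ℝ, 0 ≤ K ∧ ∀ z, eval z F = 0 → ‖eval z A‖ ≤ K * ‖eval z (pderiv 1 F)‖ := by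
  obtain ⟨R, hR1, hR⟩ := exists_radius_norm_le hpn hF hg hA one_pos
  obtain ⟨K, hK⟩ := (isCompact_closedBall (0 : Fin 2 → ℂ)
    (max (R ^ p) (R ^ q))).exists_norm_le_on_curve hloc
  refine ⟨max 1 K, zero_le_one.trans (le_max_left _ _), fun z hz => ?_⟩
  obtain ⟨ρ, hρ1, h0, h1, hor⟩ := exists_weighted_radius (by omega : p ≠ 0) hq z
  rcases le_or_gt ρ R with h | h
  · refine (hK z ?_ hz).trans (by gcongr; exact le_max_right _ _)
    rw [mem_closedBall_zero_iff, pi_norm_le_iff_of_nonneg (by positivity), Fin.forall_fin_two]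
    refine ⟨h0.trans (le_max_of_le_left ?_), h1.trans (le_max_of_le_right ?_)⟩ <;> gcongr
  · exact (hR ρ z h.le h0 h1 (hor.resolve_left (by linarith)) hz).1.trans
      (by gcongr; exact le_max_left _ _)

lemma IsWeierstrass.mem_roots_fiberPoly {p q : ℕ} (hp : 0 < p) {F : MvPolynomial (Fin 2) ℂ}
    (hF : IsWeierstrass p q F) {x y : ℂ} :
    y ∈ (fiberPoly F x).roots ↔ eval ![x, y] F = 0 := by
  rw [Polynomial.mem_roots (hF.monic_fiberPoly hp x).1.ne_zero, Polynomial.IsRoot,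
    eval_fiberPoly]

/-- A polynomial of small weight that is a bounded multiple of `∂F/∂Y` along the curve `F = 0`
vanishes on the curve above large `x`. -/
theorem IsWeierstrass.eval_eq_zero_of_norm_le {p q n : ℕ} (hpn : p = n + 1) (hq : q ≠ 0)
    {F A : MvPolynomial (Fin 2) ℂ} (hF : IsWeierstrass p q F)
    (hg : pderiv 1 F - C (p : ℂ) * X 1 ^ n ∈ wtLT p q 0 (n * q))
    (hA : A ∈ wtLT p q 0 (n * q)) {K : ℝ} (hK0 : 0 ≤ K)
    (hK : ∀ z, eval z F = 0 → ‖eval z A‖ ≤ K * ‖eval z (pderiv 1 F)‖) :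
    ∃ R : ℝ, ∀ z : Fin 2 → ℂ, R < ‖z 0‖ → eval z F = 0 →
      eval z (pderiv 1 F) ≠ 0 ∧ eval z A = 0 := by
  have hp : 0 < p := by omega
  obtain ⟨R, hR⟩ := hF.exists_radius hpn hq hg hA one_pos
  refine ⟨R, fun z hz hzF => ⟨(hR z hz hzF).2, ?_⟩⟩
  by_contra hAz
  have hgz := (hR z hz hzF).2
  have hz' : z = ![z 0, z 1] := by ext i; fin_cases i <;> rfl
  set t : ℂ := eval z A / eval z (pderiv 1 F)
  have ht : 0 < ‖t‖ := norm_pos_iff.2 (div_ne_zero hAz hgz)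
  obtain ⟨D, hD⟩ := hF.exists_fiber_prod hp (pderiv 1 F)
  obtain ⟨N, hN⟩ := hF.exists_fiber_prod hp (C t * pderiv 1 F - A)
  obtain ⟨c, hc⟩ := D.exists_eq_C_mul_of_norm_le N ((‖t‖ + K) ^ p) (by
    intro x
    have h := Multiset.norm_prod_map_le (fiberPoly F x).roots
      (fun y => eval ![x, y] (C t * pderiv 1 F - A)) (fun y => eval ![x, y] (pderiv 1 F))
      (K := ‖t‖ + K) (by positivity) (by
        intro y hy
        rw [hF.mem_roots_fiberPoly hp] at hy
        rw [eval_sub, eval_mul, eval_C, add_mul, ← norm_mul]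
        exact (norm_sub_le _ _).trans (by gcongr; exact hK _ hy))
    rw [← hN, ← hD, (IsAlgClosed.splits (fiberPoly F x)).natDegree_eq_card_roots.symm,
      (hF.monic_fiberPoly hp x).2] at h
    exact h)
  have hN0 : N.eval (z 0) = 0 := by
    rw [hN, Multiset.prod_eq_zero_iff, Multiset.mem_map]
    refine ⟨z 1, (hF.mem_roots_fiberPoly hp).2 (hz' ▸ hzF), ?_⟩
    rw [← hz', eval_sub, eval_mul, eval_C, div_mul_cancel₀ _ hgz, sub_self]
  have hD0 : D.eval (z 0) ≠ 0 := by
    rw [hD, Ne, Multiset.prod_eq_zero_iff, Multiset.mem_map]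
    rintro ⟨y, hy, h⟩
    exact (hR ![z 0, y] hz ((hF.mem_roots_fiberPoly hp).1 hy)).2 h
  have hc0 : c = 0 := by
    rw [hc, Polynomial.eval_mul, Polynomial.eval_C] at hN0
    exact (mul_eq_zero.1 hN0).resolve_right hD0
  obtain ⟨S, hS⟩ := hF.exists_radius hpn hq hg hA (half_pos ht)
  obtain ⟨x, hx⟩ := NormedField.exists_lt_norm ℂ S
  have hNx : N.eval x = 0 := by simp [hc, hc0]
  rw [hN, Multiset.prod_eq_zero_iff, Multiset.mem_map] at hNx
  obtain ⟨y, hy, h⟩ := hNx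
  obtain ⟨h1, h2⟩ := hS ![x, y] hx ((hF.mem_roots_fiberPoly hp).1 hy)
  rw [eval_sub, eval_mul, eval_C, sub_eq_zero] at h
  rw [← h, norm_mul] at h1
  have := mul_pos ht (norm_pos_iff.2 h2)
  linarith

/-- A polynomial of degree `< p` in `Y` vanishing on the curve above large `x` is zero. -/
theorem IsWeierstrass.eq_zero_of_eval_eq_zero {p q : ℕ} (hp : 0 < p)
    {F H : MvPolynomial (Fin 2) ℂ} (hF : IsWeierstrass p q F)
    (hH : H ∈ restrictSupport ℂ {d : Fin 2 →₀ ℕ | d 1 < p}) {R : ℝ}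
    (h : ∀ z : Fin 2 → ℂ, R < ‖z 0‖ → eval z F = 0 →
      eval z (pderiv 1 F) ≠ 0 ∧ eval z H = 0) : H = 0 := by
  have hfib : ∀ x : ℂ, R < ‖x‖ → fiberPoly H x = 0 := by
    intro x hx
    obtain ⟨hm, hd⟩ := hF.monic_fiberPoly hp x
    have hnodup : (fiberPoly F x).roots.Nodup := by
      rw [Multiset.nodup_iff_count_le_one]
      intro y
      rw [Polynomial.count_roots]
      by_contra hlt
      rw [not_le, Polynomial.one_lt_rootMultiplicity_iff_isRoot hm.ne_zero] at hlt
      have h1 := hlt.1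
      rw [Polynomial.IsRoot, eval_fiberPoly] at h1
      refine (h ![x, y] hx h1).1 ?_
      have h2 := hlt.2
      rw [Polynomial.IsRoot, fiberPoly, Polynomial.derivative_map, derivative_toPoly,
        ← fiberPoly, eval_fiberPoly] at h2
      exact h2
    by_contra hne
    have hle : (fiberPoly F x).roots ≤ (fiberPoly H x).roots := by
      rw [Multiset.le_iff_subset hnodup]
      intro y hy
      rw [Polynomial.mem_roots hne, Polynomial.IsRoot, eval_fiberPoly]
      exact (h ![x, y] hx ((hF.mem_roots_fiberPoly hp).1 hy)).2
    have h1 := Multiset.card_le_card hle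
    rw [(IsAlgClosed.splits (fiberPoly F x)).natDegree_eq_card_roots.symm, hd] at h1
    have h2 : (fiberPoly H x).degree < p :=
      Polynomial.degree_map_le.trans_lt (degree_toPoly_lt hH)
    rw [Polynomial.degree_eq_natDegree hne, Nat.cast_lt] at h2
    exact absurd (h1.trans (Polynomial.card_roots' _)) (by omega)
  have hto : toPoly H = 0 := by
    ext1 k
    rw [Polynomial.coeff_zero]
    refine Polynomial.eq_zero_of_infinite_isRoot _ (Set.Infinite.mono
      (s := {x : ℂ | R < ‖x‖}) (fun x hx => ?_) ?_)
    · have := congrArg (fun f => Polynomial.coeff f k) (hfib x hx)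
      simpa [fiberPoly, Polynomial.coeff_map] using this
    · intro hfin
      obtain ⟨S, hS⟩ := hfin.isBounded.exists_norm_le
      obtain ⟨x, hx⟩ := NormedField.exists_lt_norm ℂ (max R S)
      have := hS x ((le_max_left _ _).trans_lt hx)
      linarith [le_max_right R S]
  refine MvPolynomial.funext fun z => ?_
  have hz' : z = ![z 0, z 1] := by ext i; fin_cases i <;> rfl
  rw [hz', ← eval_fiberPoly, fiberPoly, hto]
  simp

lemma pderiv_mem_restrictSupport {s t : Set (Fin 2 →₀ ℕ)} {H : MvPolynomial (Fin 2) ℂ}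
    {i : Fin 2} (hH : H ∈ restrictSupport ℂ s)
    (h : ∀ d ∈ s, d i ≠ 0 → d - Finsupp.single i 1 ∈ t) : pderiv i H ∈ restrictSupport ℂ t := by
  rw [H.as_sum, map_sum]
  refine Submodule.sum_mem _ fun d hd => ?_
  rw [pderiv_monomial]
  by_cases hdi : d i = 0
  · simp [hdi]
  · exact (monomial_mem_restrictSupport ℂ).2
      (Or.inl (h d (mem_restrictSupport_iff_coeff.1 hH d (mem_support_iff.1 hd)) hdi))

lemma pderiv_zero_mem_wtLT {p q k l : ℕ} (hl : k = l + p) {H : MvPolynomial (Fin 2) ℂ}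
    (hH : H ∈ wtLT p q 0 k) : pderiv 0 H ∈ wtLT p q 0 l := by
  refine pderiv_mem_restrictSupport hH fun d hd hd0 => ?_
  obtain ⟨a, ha⟩ := Nat.exists_eq_succ_of_ne_zero hd0
  simp only [Set.mem_ofPred_eq, expWt, ha, Nat.succ_mul] at hd
  simp only [Set.mem_ofPred_eq, expWt, Finsupp.tsub_apply, Finsupp.single_apply, ha]
  simp
  omega

lemma pderiv_one_mem_wtLT {p q k l : ℕ} (hl : k = l + q) {H : MvPolynomial (Fin 2) ℂ}
    (hH : H ∈ wtLT p q 0 k) : pderiv 1 H ∈ wtLT p q 0 l := by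
  refine pderiv_mem_restrictSupport hH fun d hd hd0 => ?_
  obtain ⟨a, ha⟩ := Nat.exists_eq_succ_of_ne_zero hd0
  simp only [Set.mem_ofPred_eq, expWt, ha, Nat.succ_mul] at hd
  simp only [Set.mem_ofPred_eq, expWt, Finsupp.tsub_apply, Finsupp.single_apply, ha]
  simp
  omega

lemma IsWeierstrass.pderiv_zero {p q m : ℕ} (hq : q = m + 1) {F : MvPolynomial (Fin 2) ℂ}
    (hF : IsWeierstrass p q F) :
    pderiv 0 F + C (q : ℂ) * X 0 ^ m ∈ wtLT p q 0 (m * p) := by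
  have h := pderiv_zero_mem_wtLT (l := m * p) (by rw [hq]; ring) hF
  subst hq
  simpa [pderiv_X, pderiv_pow, sub_neg_eq_add] using h

lemma IsWeierstrass.pderiv_one {p q n : ℕ} (hp : p = n + 1) {F : MvPolynomial (Fin 2) ℂ}
    (hF : IsWeierstrass p q F) :
    pderiv 1 F - C (p : ℂ) * X 1 ^ n ∈ wtLT p q 0 (n * q) := by
  have h := pderiv_one_mem_wtLT (l := n * q) (by rw [hp]; ring) hF
  subst hp
  simpa [pderiv_X, pderiv_pow] using h

lemma IsWeierstrass.mem_wtLT {p q : ℕ} {F : MvPolynomial (Fin 2) ℂ}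
    (hF : IsWeierstrass p q F) : F ∈ wtLT p q 0 (p * q + 1) := by
  have h1 : (X 1 ^ p : MvPolynomial (Fin 2) ℂ) ∈ wtLT p q 0 (p * q + 1) := by
    rw [X_pow_eq_monomial]
    exact (monomial_mem_restrictSupport ℂ).2 (Or.inl (by simp [expWt]))
  have h2 : (X 0 ^ q : MvPolynomial (Fin 2) ℂ) ∈ wtLT p q 0 (p * q + 1) := by
    rw [X_pow_eq_monomial]
    exact (monomial_mem_restrictSupport ℂ).2 (Or.inl (by simp [expWt, mul_comm]))
  have := Submodule.add_mem _ (wtLT_mono (by omega) hF) (Submodule.sub_mem _ h1 h2)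
  simpa using this

/-- On a nodal curve, the functionals annihilating the Jacobian ideal together with `F` are
determined by their values on polynomials of weight less than `pq`. -/
theorem IsWeierstrass.functional_eq_zero {p q : ℕ} (hp : 2 ≤ p) (hq : 2 ≤ q)
    {F : MvPolynomial (Fin 2) ℂ} (hF : IsWeierstrass p q F)
    (hnode : ∀ z, eval z F = 0 → eval z (pderiv 0 F) = 0 → eval z (pderiv 1 F) = 0 →
      eval z (pderiv 0 (pderiv 0 F)) * eval z (pderiv 1 (pderiv 1 F)) -
        eval z (pderiv 1 (pderiv 0 F)) * eval z (pderiv 0 (pderiv 1 F)) ≠ 0)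
    (phi : MvPolynomial (Fin 2) ℂ →ₗ[ℂ] ℂ) (hpF : ∀ A, phi (A * F) = 0)
    (hpX : ∀ A, phi (A * pderiv 0 F) = 0) (hpY : ∀ A, phi (A * pderiv 1 F) = 0)
    (hlow : ∀ A ∈ wtLT p q 0 (p * q), phi A = 0) : phi = 0 := by
  by_contra hphi
  obtain ⟨n, rfl⟩ : ∃ n, p = n + 2 := ⟨p - 2, by omega⟩
  obtain ⟨m, rfl⟩ : ∃ m, q = m + 2 := ⟨q - 2, by omega⟩
  have hX := hF.pderiv_zero (m := m + 1) rfl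
  have hY := hF.pderiv_one (n := n + 1) rfl
  have hm0 : ((m + 2 : ℕ) : ℂ) ≠ 0 := by exact_mod_cast (by omega : m + 2 ≠ 0)
  have hn0 : ((n + 2 : ℕ) : ℂ) ≠ 0 := by exact_mod_cast (by omega : n + 2 ≠ 0)
  set a : ℂ := ((m + 2 : ℕ) : ℂ)
  set b : ℂ := ((n + 2 : ℕ) : ℂ)
  obtain ⟨G, A, B, hG, hGF, hA, hB⟩ := exists_mul_mem_of_functional (m := m) (n := n)
    (f := C (-a⁻¹) * pderiv 0 F) (g := C b⁻¹ * pderiv 1 F)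
    (by omega) (by omega) (by
      have e : C (-a⁻¹) * pderiv 0 F - monomial (Finsupp.single 0 (m + 1)) 1 =
          (-a⁻¹) • (pderiv 0 F + C a * X 0 ^ (m + 1)) := by
        have h : (C a⁻¹ * C a : MvPolynomial (Fin 2) ℂ) = 1 := by
          rw [← C_mul, inv_mul_cancel₀ hm0, C_1]
        rw [← X_pow_eq_monomial, smul_eq_C_mul, C_neg]
        linear_combination X 0 ^ (m + 1) * h
      rw [e]
      exact Submodule.smul_mem _ _ hX) (by
      have e : C b⁻¹ * pderiv 1 F - monomial (Finsupp.single 1 (n + 1)) 1 =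
          b⁻¹ • (pderiv 1 F - C b * X 1 ^ (n + 1)) := by
        have h : (C b⁻¹ * C b : MvPolynomial (Fin 2) ℂ) = 1 := by
          rw [← C_mul, inv_mul_cancel₀ hn0, C_1]
        rw [← X_pow_eq_monomial, smul_eq_C_mul]
        linear_combination X 1 ^ (n + 1) * h
      rw [e]
      exact Submodule.smul_mem _ _ hY)
    hF.mem_wtLT phi hphi (fun A => by rw [← mul_assoc, hpX]) (fun A => by rw [← mul_assoc, hpY])
    hpF hlow
  obtain ⟨A', hA'⟩ : ∃ A', A' = (-a⁻¹) • A := ⟨_, rfl⟩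
  obtain ⟨B', hB'⟩ : ∃ B', B' = b⁻¹ • B := ⟨_, rfl⟩
  have hGF' : G * F = A' * pderiv 0 F + B' * pderiv 1 F := by
    rw [hGF, hA', hB', smul_eq_C_mul, smul_eq_C_mul]; ring
  have hAw : A' ∈ wtLT (n + 2) (m + 2) 0 ((n + 1) * (m + 2)) := by
    rw [hA']
    exact Submodule.smul_mem _ _ (wtLT_mono (by ring_nf; omega) hA)
  have hBw : B' ∈ wtLT (n + 2) (m + 2) 0 ((n + 2) * (m + 2)) := by
    rw [hB']
    exact Submodule.smul_mem _ _ (wtLT_mono (by ring_nf; omega) hB)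
  have htan : ∀ z, eval z F = 0 →
      eval z A' * eval z (pderiv 0 F) + eval z B' * eval z (pderiv 1 F) = 0 := by
    intro z hz
    have := congrArg (eval z) hGF'
    simpa [hz] using this.symm
  have hloc : ∀ z, eval z F = 0 → ∃ K : ℝ, ∀ᶠ w in nhds z, eval w F = 0 →
      ‖eval w A'‖ ≤ K * ‖eval w (pderiv 1 F)‖ := by
    intro z hz
    refine eventually_norm_le_on_curve htan fun hf hg => ?_
    have hdet := hnode z hz hf hg
    have d0 := congrArg (fun H => eval z (pderiv 0 H)) hGF'
    have d1 := congrArg (fun H => eval z (pderiv 1 H)) hGF'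
    simp only [pderiv_mul, map_add, map_mul, hz, hf, hg, mul_zero, zero_add, add_zero] at d0 d1
    refine ⟨mul_left_cancel₀ hdet ?_, mul_left_cancel₀ hdet ?_, hdet⟩
    · linear_combination eval z (pderiv 0 (pderiv 1 F)) * d1 -
        eval z (pderiv 1 (pderiv 1 F)) * d0
    · linear_combination eval z (pderiv 1 (pderiv 0 F)) * d0 -
        eval z (pderiv 0 (pderiv 0 F)) * d1
  obtain ⟨K, hK0, hK⟩ := hF.exists_norm_le_on_curve rfl (by omega) hY hAw hloc
  obtain ⟨R, hR⟩ := hF.eval_eq_zero_of_norm_le rfl (by omega) hY hAw hK0 hK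
  have hA0 : A' = 0 := hF.eq_zero_of_eval_eq_zero (by omega)
    (wtLT_le_degree_lt (by gcongr; omega) hAw) hR
  have hB0 : B' = 0 := by
    refine hF.eq_zero_of_eval_eq_zero (by omega) (wtLT_le_degree_lt le_rfl hBw) (R := R)
      fun z hz hzF => ⟨(hR z hz hzF).1, ?_⟩
    have h := htan z hzF
    rw [(hR z hz hzF).2, zero_mul, zero_add] at h
    exact (mul_eq_zero.1 h).resolve_right (hR z hz hzF).1
  rw [hA0, hB0, zero_mul, zero_mul, add_zero] at hGF'
  rcases mul_eq_zero.1 hGF' with h | h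
  · exact hG h
  · have := (hF.monic_toPoly (by omega)).1.ne_zero
    rw [h, map_zero] at this
    exact this rfl

lemma exists_eval_eq_of_injective {ι : Type*} [Finite ι] {P : ι → Fin 2 → ℂ}
    (hP : Function.Injective P) (v : ι → ℂ) :
    ∃ H : MvPolynomial (Fin 2) ℂ, ∀ i, eval (P i) H = v i := by
  classical
  cases nonempty_fintype ι
  have hsep : ∀ i j, ∃ L : MvPolynomial (Fin 2) ℂ, i ≠ j → eval (P j) L = 0 ∧ eval (P i) L ≠ 0 := by
    intro i j
    by_cases hij : i = j
    · exact ⟨0, fun h => absurd hij h⟩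
    · obtain ⟨k, hk⟩ := Function.ne_iff.1 (hP.ne hij)
      exact ⟨X k - C (P j k), fun _ => by simpa [sub_eq_zero] using hk⟩
  choose L hL using hsep
  let E : ι → MvPolynomial (Fin 2) ℂ := fun i => ∏ j ∈ Finset.univ.erase i, L i j
  have hE : ∀ i, eval (P i) (E i) ≠ 0 := fun i => by
    rw [map_prod, Finset.prod_ne_zero_iff]
    exact fun j hj => (hL i j (Finset.ne_of_mem_erase hj).symm).2
  have hE' : ∀ i j, i ≠ j → eval (P j) (E i) = 0 := fun i j hij => by
    rw [map_prod]
    exact Finset.prod_eq_zero (Finset.mem_erase.2 ⟨hij.symm, Finset.mem_univ j⟩) (hL i j hij).1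
  refine ⟨∑ i, C (v i / eval (P i) (E i)) * E i, fun j => ?_⟩
  rw [map_sum, Finset.sum_eq_single j]
  · rw [eval_mul, eval_C, div_mul_cancel₀ _ (hE j)]
  · intro i _ hij
    rw [eval_mul, hE' i j hij, mul_zero]
  · simp

/-- The nodes of a nodal curve impose independent conditions on polynomials of weight less
than `pq`. -/
theorem IsWeierstrass.exists_eval_eq {p q : ℕ} (hp : 2 ≤ p) (hq : 2 ≤ q)
    {F : MvPolynomial (Fin 2) ℂ} (hF : IsWeierstrass p q F)
    (hnode : ∀ z, eval z F = 0 → eval z (pderiv 0 F) = 0 → eval z (pderiv 1 F) = 0 →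
      eval z (pderiv 0 (pderiv 0 F)) * eval z (pderiv 1 (pderiv 1 F)) -
        eval z (pderiv 1 (pderiv 0 F)) * eval z (pderiv 0 (pderiv 1 F)) ≠ 0)
    {ι : Type*} [Finite ι] {P : ι → Fin 2 → ℂ} (hP : Function.Injective P)
    (hPF : ∀ i, eval (P i) F = 0) (hPX : ∀ i, eval (P i) (pderiv 0 F) = 0)
    (hPY : ∀ i, eval (P i) (pderiv 1 F) = 0) (v : ι → ℂ) :
    ∃ H ∈ wtLT p q 0 (p * q), ∀ i, eval (P i) H = v i := by
  let ev : MvPolynomial (Fin 2) ℂ →ₗ[ℂ] ι → ℂ :=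
    LinearMap.pi fun i => (aeval (P i) : MvPolynomial (Fin 2) ℂ →ₐ[ℂ] ℂ).toLinearMap
  have hev : ∀ H i, ev H i = eval (P i) H := fun H i => by simp [ev, aeval_eq_eval]
  have htop : (wtLT p q 0 (p * q)).map ev = ⊤ := by
    by_contra hne
    obtain ⟨ψ, hψ, hker⟩ := Submodule.exists_le_ker_of_lt_top _ (lt_top_iff_ne_top.2 hne)
    have hkill : ∀ H A, (∀ i, eval (P i) H = 0) → (ψ ∘ₗ ev) (A * H) = 0 := by
      intro H A hH
      have : ev (A * H) = 0 := by
        ext i; rw [hev, eval_mul, hH, mul_zero, Pi.zero_apply]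
      rw [LinearMap.comp_apply, this, map_zero]
    have h0 := hF.functional_eq_zero hp hq hnode (ψ ∘ₗ ev) (fun A => hkill F A hPF)
      (fun A => hkill _ A hPX) (fun A => hkill _ A hPY)
      (fun A hA => hker (Submodule.mem_map_of_mem hA))
    apply hψ
    ext1 w
    obtain ⟨H, hH⟩ := exists_eval_eq_of_injective hP w
    have hw : w = ev H := by ext i; rw [hev, hH]
    rw [hw]
    exact LinearMap.congr_fun h0 H
  obtain ⟨H, hH, hHv⟩ := (htop ▸ Submodule.mem_top : v ∈ (wtLT p q 0 (p * q)).map ev)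
  exact ⟨H, hH, fun i => by rw [← hev, hHv]⟩

lemma pderiv_zero_pderiv_one (G : MvPolynomial (Fin 2) ℂ) :
    pderiv 0 (pderiv 1 G) = pderiv 1 (pderiv 0 G) := by
  induction G using MvPolynomial.induction_on with
  | C a => simp
  | add G H hG hH => simp only [map_add, hG, hH]
  | mul_X G i hG =>
    fin_cases i <;> simp [pderiv_X, hG, add_comm]

/-- The polynomial of weight less than `pq` with prescribed coefficients. -/
noncomputable def lowPoly (p q : ℕ) : (idxSet p q → ℂ) →ₗ[ℂ] MvPolynomial (Fin 2) ℂ :=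
  Fintype.linearCombination ℂ fun i : idxSet p q =>
    (X 0 ^ (i : ℕ × ℕ).1 * X 1 ^ (i : ℕ × ℕ).2 : MvPolynomial (Fin 2) ℂ)

lemma wPoly_eq (p q : ℕ) (β : idxSet p q → ℂ) :
    wPoly ℂ p q β = X 1 ^ p - X 0 ^ q + lowPoly p q β := by
  simp [wPoly, lowPoly, Fintype.linearCombination_apply, smul_eq_C_mul, mul_assoc]

lemma mul_pow_eq_monomial (i j : ℕ) :
    (X 0 ^ i * X 1 ^ j : MvPolynomial (Fin 2) ℂ) =
      monomial (Finsupp.single 0 i + Finsupp.single 1 j) 1 := by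
  rw [X_pow_eq_monomial, X_pow_eq_monomial, monomial_mul, one_mul]

lemma mul_pow_mem_wtLT {p q : ℕ} (i : idxSet p q) :
    (X 0 ^ (i : ℕ × ℕ).1 * X 1 ^ (i : ℕ × ℕ).2 : MvPolynomial (Fin 2) ℂ) ∈
      wtLT p q 0 (p * q) := by
  rw [mul_pow_eq_monomial]
  refine (monomial_mem_restrictSupport ℂ).2 (Or.inl ?_)
  have := (Finset.mem_filter.1 i.2).2
  simpa [expWt] using this

lemma range_lowPoly (p q : ℕ) :
    LinearMap.range (lowPoly p q) = wtLT p q 0 (p * q) := by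
  refine le_antisymm ?_ fun H hH => ?_
  · rintro _ ⟨β, rfl⟩
    rw [lowPoly, Fintype.linearCombination_apply]
    exact Submodule.sum_mem _ fun i _ => Submodule.smul_mem _ _ (mul_pow_mem_wtLT i)
  · rw [H.as_sum]
    refine Submodule.sum_mem _ fun d hd => ?_
    have hw := mem_restrictSupport_iff_coeff.1 hH d (mem_support_iff.1 hd)
    simp only [Set.mem_ofPred_eq, expWt, add_zero] at hw
    have h0 : d 0 < q := by
      by_contra h
      have := Nat.mul_le_mul_right p (not_lt.1 h)
      rw [mul_comm q p] at this
      omega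
    have h1 : d 1 < p := by
      by_contra h
      have := Nat.mul_le_mul_right q (not_lt.1 h)
      omega
    let i : idxSet p q := ⟨(d 0, d 1), Finset.mem_filter.2
      ⟨Finset.mem_product.2 ⟨Finset.mem_range.2 h0, Finset.mem_range.2 h1⟩, hw⟩⟩
    refine ⟨Pi.single i (coeff d H), ?_⟩
    have hd' : Finsupp.single 0 (d 0) + Finsupp.single 1 (d 1) = d := by
      ext k; fin_cases k <;> simp
    rw [lowPoly, Fintype.linearCombination_apply_single, mul_pow_eq_monomial, smul_monomial, hd']
    simp

lemma isWeierstrass_wPoly {p q : ℕ} (β : idxSet p q → ℂ) :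
    IsWeierstrass p q (wPoly ℂ p q β) := by
  rw [IsWeierstrass, wPoly_eq, add_sub_cancel_left, ← range_lowPoly]
  exact LinearMap.mem_range_self _ _

/-- The differential of `(β, z) ↦ (T F_β)(z)` for a linear operator `T` on polynomials. -/
noncomputable def wDeriv {p q : ℕ} (T : MvPolynomial (Fin 2) ℂ →ₗ[ℂ] MvPolynomial (Fin 2) ℂ)
    (β : idxSet p q → ℂ) (z : Fin 2 → ℂ) :
    (idxSet p q → ℂ) × (Fin 2 → ℂ) →L[ℂ] ℂ :=
  (∑ i : idxSet p q, eval z (T (X 0 ^ (i : ℕ × ℕ).1 * X 1 ^ (i : ℕ × ℕ).2)) •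
      ContinuousLinearMap.proj i) ∘L ContinuousLinearMap.fst ℂ _ _ +
    evalDeriv (T (wPoly ℂ p q β)) z ∘L ContinuousLinearMap.snd ℂ _ _

lemma eval_lowPoly {p q : ℕ} (T : MvPolynomial (Fin 2) ℂ →ₗ[ℂ] MvPolynomial (Fin 2) ℂ)
    (β : idxSet p q → ℂ) (z : Fin 2 → ℂ) :
    eval z (T (lowPoly p q β)) = ∑ i : idxSet p q,
      β i * eval z (T (X 0 ^ (i : ℕ × ℕ).1 * X 1 ^ (i : ℕ × ℕ).2)) := by
  simp [lowPoly, Fintype.linearCombination_apply, smul_eval]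

lemma wDeriv_apply {p q : ℕ} (T : MvPolynomial (Fin 2) ℂ →ₗ[ℂ] MvPolynomial (Fin 2) ℂ)
    (β : idxSet p q → ℂ) (z : Fin 2 → ℂ) (x : (idxSet p q → ℂ) × (Fin 2 → ℂ)) :
    wDeriv T β z x = eval z (T (lowPoly p q x.1)) + evalDeriv (T (wPoly ℂ p q β)) z x.2 := by
  rw [eval_lowPoly]
  simp [wDeriv, mul_comm]

lemma hasStrictFDerivAt_wPoly {p q : ℕ}
    (T : MvPolynomial (Fin 2) ℂ →ₗ[ℂ] MvPolynomial (Fin 2) ℂ)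
    (x : (idxSet p q → ℂ) × (Fin 2 → ℂ)) :
    HasStrictFDerivAt (fun x : (idxSet p q → ℂ) × (Fin 2 → ℂ) =>
      eval x.2 (T (wPoly ℂ p q x.1))) (wDeriv T x.1 x.2) x := by
  have hG : ∀ G : MvPolynomial (Fin 2) ℂ, HasStrictFDerivAt
      (fun x : (idxSet p q → ℂ) × (Fin 2 → ℂ) => eval x.2 G)
      (evalDeriv G x.2 ∘L ContinuousLinearMap.snd ℂ _ _) x := fun G =>
    (G.hasStrictFDerivAt_eval x.2).comp x hasStrictFDerivAt_snd
  have hβ : ∀ i : idxSet p q, HasStrictFDerivAt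
      (fun x : (idxSet p q → ℂ) × (Fin 2 → ℂ) => x.1 i)
      (ContinuousLinearMap.proj (R := ℂ) (φ := fun _ : idxSet p q => ℂ) i ∘L
        ContinuousLinearMap.fst ℂ _ _) x := fun i =>
    (ContinuousLinearMap.proj (R := ℂ) (φ := fun _ : idxSet p q => ℂ) i ∘L
        ContinuousLinearMap.fst ℂ _ (Fin 2 → ℂ)).hasStrictFDerivAt
  have h := (hG (T (X 1 ^ p - X 0 ^ q))).fun_add (HasStrictFDerivAt.fun_sum (u := Finset.univ)
    fun i _ => (hβ i).fun_mul (hG (T (X 0 ^ (i : ℕ × ℕ).1 * X 1 ^ (i : ℕ × ℕ).2))))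
  simp only [← eval_lowPoly, ← map_add, ← wPoly_eq] at h
  refine h.congr_fderiv ?_
  refine ContinuousLinearMap.ext fun y => ?_
  rw [wDeriv_apply, wPoly_eq, eval_lowPoly, map_add]
  have hadd : ∀ G H : MvPolynomial (Fin 2) ℂ, evalDeriv (G + H) x.2 y.2 =
      evalDeriv G x.2 y.2 + evalDeriv H x.2 y.2 := by
    intro G H; simp [evalDeriv_apply]; ring
  have hsum : evalDeriv (T (lowPoly p q x.1)) x.2 y.2 = ∑ i : idxSet p q, x.1 i *
      evalDeriv (T (X 0 ^ (i : ℕ × ℕ).1 * X 1 ^ (i : ℕ × ℕ).2)) x.2 y.2 := by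
    simp only [evalDeriv_apply, lowPoly, Fintype.linearCombination_apply, map_sum, map_smul,
      Derivation.map_smul, smul_eval, Finset.sum_mul, ← Finset.sum_add_distrib, mul_add,
      mul_assoc]
  rw [hadd, hsum]
  simp [Finset.sum_add_distrib, mul_comm]
  ring

lemma continuous_eval_wPoly {p q : ℕ}
    (T : MvPolynomial (Fin 2) ℂ →ₗ[ℂ] MvPolynomial (Fin 2) ℂ) :
    Continuous fun x : (idxSet p q → ℂ) × (Fin 2 → ℂ) => eval x.2 (T (wPoly ℂ p q x.1)) :=
  continuous_iff_continuousAt.2 fun x => (hasStrictFDerivAt_wPoly T x).continuousAt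

lemma exists_sum_eval_bound {ι : Type*} [Fintype ι] {p q k : ℕ} {G : ι → MvPolynomial (Fin 2) ℂ}
    (hG : ∀ i, G i ∈ wtLT p q 0 k) :
    ∃ C : ℝ, 0 ≤ C ∧ ∀ (β : ι → ℂ) (ρ : ℝ) (z : Fin 2 → ℂ), 1 ≤ ρ → ‖z 0‖ ≤ ρ ^ p →
      ‖z 1‖ ≤ ρ ^ q → ‖∑ i, β i * eval z (G i)‖ * ρ ≤ ‖β‖ * C * ρ ^ k := by
  choose C hC h using fun i => exists_eval_bound (hG i)
  refine ⟨∑ i, C i, Finset.sum_nonneg fun i _ => hC i, fun β ρ z hρ h0 h1 => ?_⟩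
  have hρ0 : 0 ≤ ρ := by linarith
  calc _ ≤ (∑ i, ‖β i * eval z (G i)‖) * ρ := by gcongr; exact norm_sum_le _ _
    _ = ∑ i, ‖β i‖ * (‖eval z (G i)‖ * ρ) := by
      rw [Finset.sum_mul]; exact Finset.sum_congr rfl fun i _ => by rw [norm_mul, mul_assoc]
    _ ≤ ∑ i, ‖β‖ * (C i * ρ ^ k) := by
      exact Finset.sum_le_sum fun i _ =>
        mul_le_mul (norm_le_pi_norm β i) (h i ρ z hρ h0 h1) (by positivity) (norm_nonneg β)
    _ = _ := by rw [← Finset.mul_sum, ← Finset.sum_mul, mul_assoc]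

/-- Critical points of `F_β` stay bounded when `β` does. -/
theorem exists_norm_le_of_critical {p q : ℕ} (hp : 2 ≤ p) (hq : 2 ≤ q) (M : ℝ) :
    ∃ R : ℝ, ∀ (β : idxSet p q → ℂ) (z : Fin 2 → ℂ), ‖β‖ ≤ M →
      eval z (pderiv 0 (wPoly ℂ p q β)) = 0 → eval z (pderiv 1 (wPoly ℂ p q β)) = 0 →
      ‖z‖ ≤ R := by
  obtain ⟨n, rfl⟩ : ∃ n, p = n + 1 := ⟨p - 1, by omega⟩
  obtain ⟨m, rfl⟩ : ∃ m, q = m + 1 := ⟨q - 1, by omega⟩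
  obtain ⟨C₀, hC₀, h₀⟩ := exists_sum_eval_bound fun i : idxSet (n + 1) (m + 1) =>
    pderiv_zero_mem_wtLT (l := m * (n + 1)) (by ring) (mul_pow_mem_wtLT i)
  obtain ⟨C₁, hC₁, h₁⟩ := exists_sum_eval_bound fun i : idxSet (n + 1) (m + 1) =>
    pderiv_one_mem_wtLT (l := n * (m + 1)) (by ring) (mul_pow_mem_wtLT i)
  set ρ₀ : ℝ := 1 + M * C₀ + M * C₁
  refine ⟨max (ρ₀ ^ (n + 1)) (ρ₀ ^ (m + 1)), fun β z hβ hX hY => ?_⟩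
  obtain ⟨ρ, hρ1, hz0, hz1, hor⟩ := exists_weighted_radius (p := n + 1) (q := m + 1)
    (by omega) (by omega) z
  have hM : 0 ≤ M := (norm_nonneg β).trans hβ
  have b0 : 0 ≤ M * C₀ := by positivity
  have b1 : 0 ≤ M * C₁ := by positivity
  have hρ0 : 0 < ρ := by linarith
  have k₀ := h₀ β ρ z hρ1 hz0 hz1
  have k₁ := h₁ β ρ z hρ1 hz0 hz1
  have e₀ := eval_lowPoly (pderiv 0 : Derivation ℂ (MvPolynomial (Fin 2) ℂ) _).toLinearMap β z
  have e₁ := eval_lowPoly (pderiv 1 : Derivation ℂ (MvPolynomial (Fin 2) ℂ) _).toLinearMap β z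
  simp only [Derivation.coeFn_coe] at e₀ e₁
  rw [← e₀] at k₀
  rw [← e₁] at k₁
  rw [wPoly_eq, map_add, eval_add] at hX hY
  rw [eq_neg_of_add_eq_zero_right hX, norm_neg] at k₀
  rw [eq_neg_of_add_eq_zero_right hY, norm_neg] at k₁
  simp [pderiv_X] at k₀ k₁
  have hkey : ∀ (N j r : ℕ) (t : ℂ) (Cj : ℝ), 0 ≤ Cj → ‖t‖ = ρ ^ r →
      ‖((N : ℂ) + 1)‖ * ‖t‖ ^ j * ρ ≤ ‖β‖ * Cj * ρ ^ (j * r) → ρ ≤ M * Cj := by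
    intro N j r t Cj hCj ht h
    have hN : 1 ≤ ‖((N : ℂ) + 1)‖ := by
      rw [← Nat.cast_succ, Complex.norm_natCast]; exact_mod_cast Nat.succ_pos N
    rw [ht, ← pow_mul, mul_comm r j] at h
    have hpos : 0 < ρ ^ (j * r) := by positivity
    have h2 : ρ ^ (j * r) * ρ ≤ ρ ^ (j * r) * (M * Cj) := by
      calc _ ≤ ‖((N : ℂ) + 1)‖ * ρ ^ (j * r) * ρ := by
            gcongr; exact le_mul_of_one_le_left hpos.le hN
        _ ≤ _ := h
        _ ≤ M * Cj * ρ ^ (j * r) := by gcongr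
        _ = _ := by ring
    exact le_of_mul_le_mul_left h2 hpos
  have hρρ : ρ ≤ ρ₀ := by
    rcases hor with h | h | h
    · rw [h]; simp only [ρ₀]; linarith
    · have := hkey m m (n + 1) (z 0) C₀ hC₀ h k₀
      simp only [ρ₀]; linarith
    · have := hkey n n (m + 1) (z 1) C₁ hC₁ h k₁
      simp only [ρ₀]; linarith
  rw [pi_norm_le_iff_of_nonneg (by positivity), Fin.forall_fin_two]
  refine ⟨hz0.trans (le_max_of_le_left ?_), hz1.trans (le_max_of_le_right ?_)⟩ <;> gcongr

lemma hasStrictFDerivAt_gradient {p q : ℕ} (x : (idxSet p q → ℂ) × (Fin 2 → ℂ)) :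
    HasStrictFDerivAt (fun x : (idxSet p q → ℂ) × (Fin 2 → ℂ) =>
      (eval x.2 (pderiv 0 (wPoly ℂ p q x.1)), eval x.2 (pderiv 1 (wPoly ℂ p q x.1))))
      ((wDeriv (pderiv 0 : Derivation ℂ (MvPolynomial (Fin 2) ℂ) _).toLinearMap x.1 x.2).prod
        (wDeriv (pderiv 1 : Derivation ℂ (MvPolynomial (Fin 2) ℂ) _).toLinearMap x.1 x.2)) x :=
  (hasStrictFDerivAt_wPoly _ x).prodMk (hasStrictFDerivAt_wPoly _ x)

/-- The Hessian matrix acts bijectively where the Hessian determinant does not vanish. -/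
lemma exists_evalDeriv_eq {F : MvPolynomial (Fin 2) ℂ} {z : Fin 2 → ℂ}
    (hdet : eval z (hessPoly ℂ F) ≠ 0) (b c : ℂ) :
    ∃ u, evalDeriv (pderiv 0 F) z u = b ∧ evalDeriv (pderiv 1 F) z u = c := by
  simp only [hessPoly, eval_sub, eval_mul, eval_pow] at hdet
  refine ⟨![(b * eval z (pderiv 1 (pderiv 1 F)) - c * eval z (pderiv 0 (pderiv 1 F))) /
      (eval z (pderiv 0 (pderiv 0 F)) * eval z (pderiv 1 (pderiv 1 F)) -
        eval z (pderiv 0 (pderiv 1 F)) ^ 2),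
    (c * eval z (pderiv 0 (pderiv 0 F)) - b * eval z (pderiv 0 (pderiv 1 F))) /
      (eval z (pderiv 0 (pderiv 0 F)) * eval z (pderiv 1 (pderiv 1 F)) -
        eval z (pderiv 0 (pderiv 1 F)) ^ 2)], ?_, ?_⟩ <;>
  · simp only [evalDeriv_apply, ← pderiv_zero_pderiv_one, Matrix.cons_val_zero,
      Matrix.cons_val_one]
    rw [mul_div_assoc', mul_div_assoc', ← add_div, div_eq_iff hdet]
    ring

lemma eq_zero_of_evalDeriv_eq_zero {F : MvPolynomial (Fin 2) ℂ} {z u : Fin 2 → ℂ}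
    (hdet : eval z (hessPoly ℂ F) ≠ 0) (h0 : evalDeriv (pderiv 0 F) z u = 0)
    (h1 : evalDeriv (pderiv 1 F) z u = 0) : u = 0 := by
  simp only [hessPoly, eval_sub, eval_mul, eval_pow] at hdet
  simp only [evalDeriv_apply, ← pderiv_zero_pderiv_one] at h0 h1
  ext i
  apply mul_left_cancel₀ hdet
  fin_cases i
  · change _ * u 0 = _ * 0
    linear_combination eval z (pderiv 1 (pderiv 1 F)) * h0 - eval z (pderiv 0 (pderiv 1 F)) * h1
  · change _ * u 1 = _ * 0
    linear_combination eval z (pderiv 0 (pderiv 0 F)) * h1 - eval z (pderiv 0 (pderiv 1 F)) * h0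

open Topology in
/-- Near a node, critical points of nearby curves are unique. -/
theorem eventually_critical_unique {p q : ℕ} {α : idxSet p q → ℂ} {z : Fin 2 → ℂ}
    (hdet : eval z (hessPoly ℂ (wPoly ℂ p q α)) ≠ 0) :
    ∃ V : Set (Fin 2 → ℂ), IsOpen V ∧ z ∈ V ∧ ∀ᶠ β in 𝓝 α, ∀ w ∈ V, ∀ w' ∈ V,
      (∀ k, eval w (pderiv k (wPoly ℂ p q β)) = 0) →
      (∀ k, eval w' (pderiv k (wPoly ℂ p q β)) = 0) → w = w' := by
  have h := (ContinuousLinearMap.fst ℂ (idxSet p q → ℂ) (Fin 2 → ℂ)).hasStrictFDerivAt.prodMk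
    (hasStrictFDerivAt_gradient (α, z))
  obtain ⟨K, hK⟩ := h.eventually_norm_sub_le (by
    rw [injective_iff_map_eq_zero]
    rintro ⟨γ, u⟩ hu
    have e1 : γ = 0 := congrArg Prod.fst hu
    subst e1
    have e2 := congrArg (fun x => x.2.1) hu
    have e3 := congrArg (fun x => x.2.2) hu
    simp only [ContinuousLinearMap.prod_apply, wDeriv_apply, map_zero, zero_add,
      Derivation.coeFn_coe, Prod.snd_zero, Prod.fst_zero] at e2 e3
    rw [eq_zero_of_evalDeriv_eq_zero hdet e2 e3]
    rfl)
  rw [nhds_prod_eq, Filter.eventually_prod_self_iff', nhds_prod_eq] at hK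
  obtain ⟨S, hS, hSK⟩ := hK
  obtain ⟨U, hU, V, hV, hUV⟩ := Filter.mem_prod_iff.1 hS
  obtain ⟨V', hV', hVo, hzV⟩ := mem_nhds_iff.1 hV
  refine ⟨V', hVo, hzV, ?_⟩
  filter_upwards [hU] with β hβ w hw w' hw' hcw hcw'
  have := hSK (β, w) (hUV ⟨hβ, hV' hw⟩) (β, w') (hUV ⟨hβ, hV' hw'⟩)
  simp only [hcw, hcw', sub_self, norm_zero, mul_zero, ContinuousLinearMap.coe_fst'] at this
  have h2 := congrArg Prod.snd (norm_le_zero_iff.1 this)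
  exact sub_eq_zero.1 h2

open Topology in
/-- Singular points of nearby curves are close to singular points of the given curve. -/
theorem eventually_singular_mem {p q : ℕ} (hp : 2 ≤ p) (hq : 2 ≤ q) {α : idxSet p q → ℂ}
    {V : Set (Fin 2 → ℂ)} (hV : IsOpen V)
    (hsing : ∀ z, eval z (wPoly ℂ p q α) = 0 →
      (∀ k, eval z (pderiv k (wPoly ℂ p q α)) = 0) → z ∈ V) :
    ∀ᶠ β in 𝓝 α, ∀ z, eval z (wPoly ℂ p q β) = 0 →
      (∀ k, eval z (pderiv k (wPoly ℂ p q β)) = 0) → z ∈ V := by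
  obtain ⟨R, hR⟩ := exists_norm_le_of_critical hp hq (‖α‖ + 1)
  have hc : IsCompact (Metric.closedBall (0 : Fin 2 → ℂ) R \ V) :=
    (isCompact_closedBall _ _).diff hV
  have h := hc.eventually_forall_of_forall_eventually (x₀ := α)
    (P := fun β z => ¬ (eval z (wPoly ℂ p q β) = 0 ∧
      ∀ k, eval z (pderiv k (wPoly ℂ p q β)) = 0)) (by
    intro z hz
    have hcl : IsClosed {x : (idxSet p q → ℂ) × (Fin 2 → ℂ) |
        eval x.2 (wPoly ℂ p q x.1) = 0 ∧ ∀ k, eval x.2 (pderiv k (wPoly ℂ p q x.1)) = 0} := by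
      rw [Set.ofPred_and, Set.ofPred_forall]
      refine (isClosed_eq (continuous_eval_wPoly LinearMap.id) continuous_const).inter ?_
      exact isClosed_iInter fun k => isClosed_eq (continuous_eval_wPoly
        (pderiv k : Derivation ℂ (MvPolynomial (Fin 2) ℂ) _).toLinearMap) continuous_const
    exact hcl.isOpen_compl.mem_nhds fun hx => hz.2 (hsing z hx.1 hx.2))
  have hb : ∀ᶠ β in 𝓝 α, ‖β‖ ≤ ‖α‖ + 1 :=
    (continuous_norm.continuousAt.eventually_lt_const (lt_add_one ‖α‖)).mono fun _ h => h.le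
  filter_upwards [h, hb] with β hβ hβb z hz hz'
  by_contra hzV
  exact hβ z ⟨mem_closedBall_zero_iff.2 (hR β z hβb (hz' 0) (hz' 1)), hzV⟩ ⟨hz, hz'⟩

/-- The values and gradients of nearby curves at points near the nodes can be prescribed. -/
theorem map_nhds_nodes {p q : ℕ} (hp : 2 ≤ p) (hq : 2 ≤ q) {α : idxSet p q → ℂ}
    {ι : Type*} [Fintype ι] {P : ι → Fin 2 → ℂ} (hP : Function.Injective P)
    (hPF : ∀ i, eval (P i) (wPoly ℂ p q α) = 0)
    (hPD : ∀ i k, eval (P i) (pderiv k (wPoly ℂ p q α)) = 0)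
    (hnode : ∀ z, eval z (wPoly ℂ p q α) = 0 → (∀ k, eval z (pderiv k (wPoly ℂ p q α)) = 0) →
      eval z (hessPoly ℂ (wPoly ℂ p q α)) ≠ 0) :
    Filter.map (fun (x : (idxSet p q → ℂ) × (ι → Fin 2 → ℂ)) (i : ι) =>
      (eval (x.2 i) (wPoly ℂ p q x.1), eval (x.2 i) (pderiv 0 (wPoly ℂ p q x.1)),
        eval (x.2 i) (pderiv 1 (wPoly ℂ p q x.1)))) (nhds (α, P)) = nhds 0 := by
  let π : ∀ i : ι, (idxSet p q → ℂ) × (ι → Fin 2 → ℂ) →L[ℂ] (idxSet p q → ℂ) × (Fin 2 → ℂ) :=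
    fun i => (ContinuousLinearMap.fst ℂ _ _).prod
      (ContinuousLinearMap.proj i ∘L ContinuousLinearMap.snd ℂ _ _)
  have hd : ∀ i, HasStrictFDerivAt (fun x : (idxSet p q → ℂ) × (ι → Fin 2 → ℂ) =>
      (eval (x.2 i) (wPoly ℂ p q x.1), eval (x.2 i) (pderiv 0 (wPoly ℂ p q x.1)),
        eval (x.2 i) (pderiv 1 (wPoly ℂ p q x.1))))
      (((wDeriv LinearMap.id α (P i)).prod
        ((wDeriv (pderiv 0 : Derivation ℂ (MvPolynomial (Fin 2) ℂ) _).toLinearMap α (P i)).prod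
        (wDeriv (pderiv 1 : Derivation ℂ (MvPolynomial (Fin 2) ℂ) _).toLinearMap α (P i)))) ∘L
          π i) (α, P) := fun i =>
    HasStrictFDerivAt.comp (α, P) (f := π i)
      ((hasStrictFDerivAt_wPoly LinearMap.id (π i (α, P))).prodMk
      (hasStrictFDerivAt_gradient (π i (α, P)))) (π i).hasStrictFDerivAt
  have h0 : (fun i => (eval (P i) (wPoly ℂ p q α), eval (P i) (pderiv 0 (wPoly ℂ p q α)),
        eval (P i) (pderiv 1 (wPoly ℂ p q α)))) = 0 := by
    funext i; rw [hPF, hPD, hPD]; rfl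
  rw [(hasStrictFDerivAt_pi.2 hd).map_nhds_eq_of_surj ?_, h0]
  rw [LinearMap.range_eq_top]
  intro v
  obtain ⟨H, hH, hHv⟩ := (isWeierstrass_wPoly α).exists_eval_eq hp hq (by
    intro z h h0 h1
    have := hnode z h (Fin.forall_fin_two.2 ⟨h0, h1⟩)
    rwa [hessPoly, eval_sub, eval_mul, eval_pow, pow_two, ← pderiv_zero_pderiv_one] at *)
    hP hPF (fun i => hPD i 0) (fun i => hPD i 1) (fun i => (v i).1)
  rw [← range_lowPoly] at hH
  obtain ⟨γ, rfl⟩ := hH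
  choose u hu0 hu1 using fun i => exists_evalDeriv_eq (hnode (P i) (hPF i) (hPD i))
    ((v i).2.1 - eval (P i) (pderiv 0 (lowPoly p q γ)))
    ((v i).2.2 - eval (P i) (pderiv 1 (lowPoly p q γ)))
  refine ⟨(γ, u), ?_⟩
  funext i
  have e : evalDeriv (wPoly ℂ p q α) (P i) (u i) = 0 := by
    rw [evalDeriv_apply, hPD, hPD]; ring
  refine Prod.ext ?_ (Prod.ext ?_ ?_)
  · simp [π, wDeriv_apply, hHv, e]
  · simp [π, wDeriv_apply, hu0]
  · simp [π, wDeriv_apply, hu1]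

open Topology in
/-- Any subset of the nodes of a nodal curve can be preserved, and the others smoothed, by an
arbitrarily small perturbation. -/
theorem exists_nodal_perturbation {p q : ℕ} (hp : 2 ≤ p) (hq : 2 ≤ q) {α : idxSet p q → ℂ}
    {ι : Type*} [Fintype ι] {P : ι → Fin 2 → ℂ} (hP : Function.Injective P)
    (hsing : ∀ z, (eval z (wPoly ℂ p q α) = 0 ∧ ∀ k, eval z (pderiv k (wPoly ℂ p q α)) = 0) ↔
      ∃ i, z = P i)
    (hnode : ∀ i, eval (P i) (hessPoly ℂ (wPoly ℂ p q α)) ≠ 0) (s : Set ι)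
    {U : Set ((idxSet p q → ℂ) × (ι → Fin 2 → ℂ))} (hU : U ∈ 𝓝 (α, P)) :
    ∃ x ∈ U, (∀ z, (eval z (wPoly ℂ p q x.1) = 0 ∧
        ∀ k, eval z (pderiv k (wPoly ℂ p q x.1)) = 0) ↔ ∃ i ∈ s, z = x.2 i) ∧
      ∀ i, eval (x.2 i) (hessPoly ℂ (wPoly ℂ p q x.1)) ≠ 0 := by
  classical
  have hPs : ∀ i, eval (P i) (wPoly ℂ p q α) = 0 ∧
    ∀ k, eval (P i) (pderiv k (wPoly ℂ p q α)) = 0 := fun i => (hsing _).2 ⟨i, rfl⟩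
  choose V hVo hPV hV using fun i => eventually_critical_unique (hnode i)
  have hfst : Filter.Tendsto (Prod.fst : (idxSet p q → ℂ) × (ι → Fin 2 → ℂ) → _)
    (𝓝 (α, P)) (𝓝 α) := continuous_fst.continuousAt
  have hpt : ∀ i, Filter.Tendsto (fun x : (idxSet p q → ℂ) × (ι → Fin 2 → ℂ) => (x.1, x.2 i))
      (𝓝 (α, P)) (𝓝 (α, P i)) := fun i =>
    (Continuous.prodMk continuous_fst ((continuous_apply i).comp continuous_snd)).continuousAt
  have hess : ∀ i, ∀ᶠ x in 𝓝 (α, P), eval (x.2 i) (hessPoly ℂ (wPoly ℂ p q x.1)) ≠ 0 := by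
    intro i
    have hc : Continuous fun x : (idxSet p q → ℂ) × (Fin 2 → ℂ) =>
        eval x.2 (hessPoly ℂ (wPoly ℂ p q x.1)) := by
      simp only [hessPoly, eval_sub, eval_mul, eval_pow]
      let d : Fin 2 → MvPolynomial (Fin 2) ℂ →ₗ[ℂ] MvPolynomial (Fin 2) ℂ :=
        fun k => (pderiv k : Derivation ℂ (MvPolynomial (Fin 2) ℂ) _).toLinearMap
      exact ((continuous_eval_wPoly (d 0 ∘ₗ d 0)).mul (continuous_eval_wPoly (d 1 ∘ₗ d 1))).sub
        ((continuous_eval_wPoly (d 0 ∘ₗ d 1)).pow 2)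
    exact (hpt i).eventually (hc.continuousAt.eventually_ne (hnode i))
  have hnear : ∀ i, ∀ᶠ x in 𝓝 (α, P), x.2 i ∈ V i := fun i =>
    (continuous_snd.continuousAt.comp (hpt i)).eventually ((hVo i).mem_nhds (hPV i))
  have hall := eventually_singular_mem hp hq (α := α) (isOpen_iUnion hVo) (by
    intro z h h'
    obtain ⟨i, rfl⟩ := (hsing z).1 ⟨h, h'⟩
    exact Set.mem_iUnion.2 ⟨i, hPV i⟩)
  have hgood : ∀ᶠ x in 𝓝 (α, P), x ∈ U ∧
      (∀ i, eval (x.2 i) (hessPoly ℂ (wPoly ℂ p q x.1)) ≠ 0) ∧ (∀ i, x.2 i ∈ V i) ∧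
      (∀ i, ∀ w ∈ V i, ∀ w' ∈ V i, (∀ k, eval w (pderiv k (wPoly ℂ p q x.1)) = 0) →
        (∀ k, eval w' (pderiv k (wPoly ℂ p q x.1)) = 0) → w = w') ∧
      ∀ z, eval z (wPoly ℂ p q x.1) = 0 → (∀ k, eval z (pderiv k (wPoly ℂ p q x.1)) = 0) →
        z ∈ ⋃ i, V i := by
    filter_upwards [hU, Filter.eventually_all.2 hess, Filter.eventually_all.2 hnear,
      hfst.eventually (Filter.eventually_all.2 hV), hfst.eventually hall] with x h1 h2 h3 h4 h5
    exact ⟨h1, h2, h3, h4, h5⟩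
  have hmap := Filter.image_mem_map (m := fun (x : (idxSet p q → ℂ) × (ι → Fin 2 → ℂ)) (i : ι) =>
      (eval (x.2 i) (wPoly ℂ p q x.1), eval (x.2 i) (pderiv 0 (wPoly ℂ p q x.1)),
        eval (x.2 i) (pderiv 1 (wPoly ℂ p q x.1)))) hgood
  rw [map_nhds_nodes hp hq hP (fun i => (hPs i).1) (fun i => (hPs i).2) (by
    intro z h h'
    obtain ⟨i, rfl⟩ := (hsing z).1 ⟨h, h'⟩
    exact hnode i)] at hmap
  have hlim : Filter.Tendsto (fun (τ : ℂ) (i : ι) => ((if i ∈ s then 0 else τ, 0, 0) : ℂ × ℂ × ℂ))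
      (𝓝[≠] 0) (𝓝 0) := by
    refine Filter.Tendsto.mono_left ?_ nhdsWithin_le_nhds
    have hc : Continuous fun (τ : ℂ) (i : ι) => ((if i ∈ s then 0 else τ, 0, 0) : ℂ × ℂ × ℂ) := by
      refine continuous_pi fun i => ?_
      by_cases hi : i ∈ s
      · simp only [hi, if_true]; exact continuous_const
      · simp only [hi, if_false]; fun_prop
    refine hc.tendsto' 0 0 ?_
    funext i
    simp
  obtain ⟨τ, ⟨x, ⟨hxU, hxh, hxV, hxu, hxs⟩, hx⟩, hτ⟩ :=
    ((hlim.eventually hmap).and eventually_mem_nhdsWithin).exists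
  have hcrit : ∀ i k, eval (x.2 i) (pderiv k (wPoly ℂ p q x.1)) = 0 := by
    intro i
    have := congrFun hx i
    exact Fin.forall_fin_two.2 ⟨congrArg (fun y => y.2.1) this, congrArg (fun y => y.2.2) this⟩
  have hval : ∀ i, eval (x.2 i) (wPoly ℂ p q x.1) = if i ∈ s then 0 else τ := fun i =>
    congrArg Prod.fst (congrFun hx i)
  refine ⟨x, hxU, fun z => ⟨?_, ?_⟩, hxh⟩
  · rintro ⟨h, h'⟩
    obtain ⟨i, hi⟩ := Set.mem_iUnion.1 (hxs z h h')
    have hz := hxu i z hi (x.2 i) (hxV i) h' (hcrit i)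
    refine ⟨i, ?_, hz⟩
    by_contra his
    have := hval i
    rw [if_neg his, ← hz, h] at this
    exact hτ this.symm
  · rintro ⟨i, hi, rfl⟩
    exact ⟨by rw [hval, if_pos hi], hcrit i⟩

/-- **Simplification of nodal curves (Proposition 3.3).** Let `C_α` be a nodal curve of type
`p,q` with exactly `l ≥ 1` nodes `P 0, …, P (l-1)`, and select `λ` pairwise distinct ones
`P (sel 0), …, P (sel (λ-1))`. Then for all `ε > 0` and `δ > 0` there is `β` with
`‖β − α‖ < ε` such that `C_β` is a nodal curve with exactly `λ` nodes `Q 0, …, Q (λ-1)`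
satisfying `‖Q k − P (sel k)‖ < δ` for all `k`. -/
theorem simplification_of_nodal_curves
    (p q : ℕ) (hp : 1 < p) (hpq : p < q) (hco : Nat.Coprime p q)
    (α : EuclideanSpace ℂ ↥(idxSet p q))
    (l : ℕ) (hl : 1 ≤ l) (P : Fin l → EuclideanSpace ℂ (Fin 2))
    (hPinj : Function.Injective P)
    (hsing : ∀ R : ℂ × ℂ,
      IsSingAt ℂ (wPoly ℂ p q fun i => α i) R ↔ ∃ i, R = (P i 0, P i 1))
    (hnode : ∀ i, IsNodeAt ℂ (wPoly ℂ p q fun i => α i) (P i 0, P i 1))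
    (lam : ℕ) (hlam1 : 1 ≤ lam) (hlaml : lam ≤ l)
    (sel : Fin lam → Fin l) (hsel : Function.Injective sel)
    (ε δ : ℝ) (hε : 0 < ε) (hδ : 0 < δ) :
    ∃ β : EuclideanSpace ℂ ↥(idxSet p q), dist β α < ε ∧
      ∃ Q : Fin lam → EuclideanSpace ℂ (Fin 2),
        Function.Injective Q ∧
        (∀ R : ℂ × ℂ,
          IsSingAt ℂ (wPoly ℂ p q fun i => β i) R ↔ ∃ k, R = (Q k 0, Q k 1)) ∧
        (∀ k, IsNodeAt ℂ (wPoly ℂ p q fun i => β i) (Q k 0, Q k 1)) ∧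
        (∀ k, dist (Q k) (P (sel k)) < δ) := by
  have hp2 : 2 ≤ p := hp
  have hvec : ∀ z : Fin 2 → ℂ, ![z 0, z 1] = z := fun z => by
    ext k; fin_cases k <;> rfl
  have hpair : ∀ z w : Fin 2 → ℂ, (z 0, z 1) = (w 0, w 1) ↔ z = w := fun z w => by
    rw [Prod.mk.injEq, funext_iff, Fin.forall_fin_two]
  have hP : Function.Injective fun i => (P i).ofLp := (WithLp.ofLp_injective 2).comp hPinj
  have hα : Filter.Tendsto (fun x : (idxSet p q → ℂ) × (Fin l → Fin 2 → ℂ) =>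
      dist (WithLp.toLp 2 x.1) α) (nhds (α.ofLp, fun i => (P i).ofLp)) (nhds 0) := by
    have hc : Continuous fun x : (idxSet p q → ℂ) × (Fin l → Fin 2 → ℂ) =>
        dist (WithLp.toLp 2 x.1) α := by fun_prop
    simpa using hc.tendsto (α.ofLp, fun i => (P i).ofLp)
  have hPi : ∀ i, Filter.Tendsto (fun x : (idxSet p q → ℂ) × (Fin l → Fin 2 → ℂ) =>
      dist (WithLp.toLp 2 (x.2 i)) (P i)) (nhds (α.ofLp, fun i => (P i).ofLp)) (nhds 0) := by
    intro i
    have hc : Continuous fun x : (idxSet p q → ℂ) × (Fin l → Fin 2 → ℂ) =>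
        dist (WithLp.toLp 2 (x.2 i)) (P i) := by fun_prop
    simpa using hc.tendsto (α.ofLp, fun i => (P i).ofLp)
  have hinj : ∀ᶠ x : (idxSet p q → ℂ) × (Fin l → Fin 2 → ℂ) in
      nhds (α.ofLp, fun i => (P i).ofLp), ∀ i j, i ≠ j → x.2 i ≠ x.2 j := by
    refine Filter.eventually_all.2 fun i => Filter.eventually_all.2 fun j => ?_
    by_cases hij : i = j
    · exact .of_forall fun _ h => absurd hij h
    have hc : ∀ i, Continuous fun x : (idxSet p q → ℂ) × (Fin l → Fin 2 → ℂ) => x.2 i :=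
      fun i => by fun_prop
    filter_upwards [(isOpen_ne_fun (hc i) (hc j)).mem_nhds (hP.ne hij)] with x hx _ using hx
  obtain ⟨x, ⟨⟨hxα, hxP⟩, hxi⟩, hxs, hxn⟩ := exists_nodal_perturbation hp2 (hp2.trans hpq.le) hP
    (fun z => by
      have := hsing (z 0, z 1)
      simp only [IsSingAt, hvec] at this
      rw [Fin.forall_fin_two, this]
      exact exists_congr fun i => hpair z (P i).ofLp)
    (fun i => by
      have := (hnode i).2
      simp only at this
      rwa [hvec (P i).ofLp] at this)
    (Set.range sel)
    (((hα.eventually_lt_const hε).and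
      (Filter.eventually_all.2 fun i => (hPi i).eventually_lt_const hδ)).and hinj)
  have hβ : ∀ R : ℂ × ℂ, IsSingAt ℂ (wPoly ℂ p q x.1) R ↔
      ∃ k, R = (x.2 (sel k) 0, x.2 (sel k) 1) := by
    intro R
    have := hxs ![R.1, R.2]
    rw [Fin.forall_fin_two, Set.exists_range_iff] at this
    exact this.trans (exists_congr fun k => (hpair ![R.1, R.2] (x.2 (sel k))).symm)
  refine ⟨WithLp.toLp 2 x.1, hxα, fun k => WithLp.toLp 2 (x.2 (sel k)), fun i j hij => ?_, hβ,
    fun k => ⟨(hβ _).2 ⟨k, rfl⟩, ?_⟩, fun k => hxP (sel k)⟩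
  · by_contra h
    exact hxi _ _ (hsel.ne h) (WithLp.toLp_injective 2 hij)
  · have := hxn (sel k)
    rw [← hvec (x.2 (sel k))] at this
    exact this
end

section
/- The polynomial Δ ∈ R is nonzero, and for every α ∈ K^I the curve C_α has at least one singular point if and only if Δ(α) = 0. In other words, the set of curves of type p,q that are singular is exactly the hypersurface {α ∈ K^I : Δ(α) = 0}. -/
open MvPolynomial

set_option synthInstance.maxHeartbeats 1000000
set_option maxHeartbeats 1000000

/-- `R = K[{A_νμ}]`, the polynomial ring in the indeterminates `A_νμ`, `(ν,μ) ∈ I`. -/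
abbrev coefRing (K : Type) [Field K] (p q : ℕ) := MvPolynomial ↥(idxSet p q) K

/-- `R[X,Y]`, with `X 0 = X` and `X 1 = Y`. -/
abbrev genRing (K : Type) [Field K] (p q : ℕ) := MvPolynomial (Fin 2) (coefRing K p q)

/-- The generic normed Weierstraß polynomial
`F = Y^p − X^q + Σ_{(ν,μ) ∈ I} A_νμ X^ν Y^μ ∈ R[X,Y]` of type `p,q`. -/
noncomputable def genF (K : Type) [Field K] (p q : ℕ) : genRing K p q :=
  X 1 ^ p - X 0 ^ q +
    ∑ i : idxSet p q, C (MvPolynomial.X i) * X 0 ^ (i : ℕ × ℕ).1 * X 1 ^ (i : ℕ × ℕ).2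

/-- The determinant `Δ ∈ R` of the `R`-linear endomorphism of `N = R[X,Y]/(F_X, F_Y)`
given by multiplication by the residue class of `F`. -/
noncomputable def genDelta (K : Type) [Field K] (p q : ℕ) : coefRing K p q :=
  LinearMap.det
    (LinearMap.mul (coefRing K p q)
      (genRing K p q ⧸ Ideal.span {pderiv 0 (genF K p q), pderiv 1 (genF K p q)})
      (Ideal.Quotient.mk (Ideal.span {pderiv 0 (genF K p q), pderiv 1 (genF K p q)})
        (genF K p q)))

theorem Module.Basis.linearIndependent_of_unitriangular {ι R M : Type*} [CommRing R]
    [AddCommGroup M] [Module R M] (b : Module.Basis ι R M) (w : ι → ℕ) (v : ι → M)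
    (h : ∀ i j, b.repr (v i - b i) j ≠ 0 → w j < w i) : LinearIndependent R v := by
  classical
  rw [linearIndependent_iff]
  intro l hl
  by_contra hne
  obtain ⟨i, hi, hmax⟩ :=
    Finset.exists_max_image l.support w (Finsupp.support_nonempty_iff.mpr hne)
  have key : ∀ j ∈ l.support, b.repr (v j) i = if j = i then 1 else 0 := by
    intro j hj
    have h0 : b.repr (v j - b j) i = 0 := by
      by_contra hc
      exact absurd (h j i hc) (not_lt.mpr (hmax j hj))
    rw [map_sub, Finsupp.sub_apply, sub_eq_zero] at h0
    rw [h0, b.repr_self, Finsupp.single_apply]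
  have hsum : b.repr (Finsupp.linearCombination R v l) i = l i := by
    rw [Finsupp.linearCombination_apply, Finsupp.sum, map_sum, Finsupp.finsetSum_apply]
    simp only [map_smul, Finsupp.smul_apply, smul_eq_mul]
    rw [Finset.sum_congr rfl fun j hj => by rw [key j hj]]
    simp [eq_comm]
  rw [hl] at hsum
  exact Finsupp.mem_support_iff.mp hi (by simpa using hsum.symm)

theorem Module.Basis.span_eq_top_of_unitriangular {ι R M : Type*} [CommRing R]
    [AddCommGroup M] [Module R M] (b : Module.Basis ι R M) (w : ι → ℕ) (v : ι → M)
    (h : ∀ i j, b.repr (v i - b i) j ≠ 0 → w j < w i) : ⊤ ≤ Submodule.span R (Set.range v) := by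
  have key : ∀ n i, w i < n → b i ∈ Submodule.span R (Set.range v) := by
    intro n
    induction n with
    | zero => intro i hi; omega
    | succ n ih =>
      intro i hi
      have hlow : v i - b i ∈ Submodule.span R (Set.range v) := by
        rw [← b.linearCombination_repr (v i - b i), Finsupp.linearCombination_apply]
        refine Submodule.sum_mem _ fun j hj => Submodule.smul_mem _ _ (ih j ?_)
        have := h i j (Finsupp.mem_support_iff.mp hj)
        omega
      have := Submodule.sub_mem _ (Submodule.subset_span (Set.mem_range_self i)) hlow
      rwa [sub_sub_cancel] at this
  rw [← b.span_eq, Submodule.span_le]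
  rintro _ ⟨i, rfl⟩
  exact key _ i (Nat.lt_succ_self _)

/-- `f` is the monomial with exponent `d` plus terms of strictly smaller weight. -/
def HasLeadingMonomial {σ R : Type*} [CommRing R] (w : (σ →₀ ℕ) →+ ℕ) (d : σ →₀ ℕ)
    (f : MvPolynomial σ R) : Prop :=
  ∀ e, coeff e (f - monomial d 1) ≠ 0 → w e < w d

namespace HasLeadingMonomial

variable {σ R : Type*} [CommRing R] {w : (σ →₀ ℕ) →+ ℕ} {d e : σ →₀ ℕ} {f g : MvPolynomial σ R}

theorem self (w : (σ →₀ ℕ) →+ ℕ) (d : σ →₀ ℕ) :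
    HasLeadingMonomial w d (monomial d (1 : R)) := by
  intro e he
  simp at he

theorem mul (hf : HasLeadingMonomial w d f) (hg : HasLeadingMonomial w e g) :
    HasLeadingMonomial w (d + e) (f * g) := by
  classical
  have hmul : ∀ (a b : MvPolynomial σ R) (k : ℕ),
      (∀ i j, coeff i a ≠ 0 → coeff j b ≠ 0 → w i + w j < k) →
      ∀ m, coeff m (a * b) ≠ 0 → w m < k := by
    intro a b k hab m hm
    obtain ⟨i, hi, j, hj, rfl⟩ :=
      Finset.mem_add.mp (support_mul a b (mem_support_iff.mpr hm))
    rw [map_add]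
    exact hab i j (mem_support_iff.mp hi) (mem_support_iff.mp hj)
  have hmon : ∀ i s : σ →₀ ℕ, coeff i (monomial s (1 : R)) ≠ 0 → i = s := by
    intro i s hi
    rw [coeff_monomial] at hi
    by_contra hne
    exact hi (if_neg (Ne.symm hne))
  intro m hm
  have hdecomp : f * g - monomial (d + e) 1 =
      (f - monomial d 1) * (g - monomial e 1) + (f - monomial d 1) * monomial e 1 +
        monomial d 1 * (g - monomial e 1) := by
    have : monomial (d + e) (1 : R) = monomial d 1 * monomial e 1 := by
      rw [monomial_mul, one_mul]
    rw [this]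
    ring
  rw [hdecomp, coeff_add, coeff_add] at hm
  rw [map_add]
  by_contra hlt
  refine hm ?_
  have h1 : coeff m ((f - monomial d 1) * (g - monomial e 1)) = 0 := by
    by_contra hc
    exact hlt (hmul _ _ _ (fun i j hi hj => add_lt_add (hf i hi) (hg j hj)) m hc)
  have h2 : coeff m ((f - monomial d 1) * monomial e 1) = 0 := by
    by_contra hc
    refine hlt (hmul _ _ _ (fun i j hi hj => ?_) m hc)
    rw [hmon j e hj]
    exact Nat.add_lt_add_right (hf i hi) _
  have h3 : coeff m (monomial d 1 * (g - monomial e 1)) = 0 := by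
    by_contra hc
    refine hlt (hmul _ _ _ (fun i j hi hj => ?_) m hc)
    rw [hmon i d hi]
    exact Nat.add_lt_add_left (hg j hj) _
  rw [h1, h2, h3, add_zero, add_zero]

theorem pow (hf : HasLeadingMonomial w d f) (n : ℕ) : HasLeadingMonomial w (n • d) (f ^ n) := by
  induction n with
  | zero => simpa using self (R := R) w (0 : σ →₀ ℕ)
  | succ n ih => rw [pow_succ, succ_nsmul]; exact ih.mul hf

end HasLeadingMonomial

section AdicBasis

variable {R : Type*} [CommRing R] (m n : ℕ) (G H : MvPolynomial (Fin 2) R)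

/-- The monomial `X ^ (i * m + ν) * Y ^ (j * n + μ)`, with `ν < m` and `μ < n`, in which
`X ^ m` is replaced by `G` and `Y ^ n` by `H`: the product `X ^ ν * Y ^ μ * G ^ i * H ^ j`. -/
noncomputable def adicMonomial (d : Fin 2 →₀ ℕ) : MvPolynomial (Fin 2) R :=
  X 0 ^ (d 0 % m) * X 1 ^ (d 1 % n) * G ^ (d 0 / m) * H ^ (d 1 / n)

variable {m n G H}

theorem hasLeadingMonomial_adicMonomial {w : (Fin 2 →₀ ℕ) →+ ℕ}
    (hG : HasLeadingMonomial w (Finsupp.single 0 m) G)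
    (hH : HasLeadingMonomial w (Finsupp.single 1 n) H) (d : Fin 2 →₀ ℕ) :
    HasLeadingMonomial w d (adicMonomial m n G H d) := by
  have h0 : HasLeadingMonomial w (Finsupp.single 0 (d 0 % m))
      (X 0 ^ (d 0 % m) : MvPolynomial (Fin 2) R) := by
    rw [X_pow_eq_monomial]; exact .self _ _
  have h1 : HasLeadingMonomial w (Finsupp.single 1 (d 1 % n))
      (X 1 ^ (d 1 % n) : MvPolynomial (Fin 2) R) := by
    rw [X_pow_eq_monomial]; exact .self _ _
  have hd : Finsupp.single 0 (d 0 % m) + Finsupp.single 1 (d 1 % n) +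
      (d 0 / m) • Finsupp.single 0 m + (d 1 / n) • Finsupp.single 1 n = d := by
    ext i
    fin_cases i
    · simp [Nat.mod_add_div' (d 0) m]
    · simp [Nat.mod_add_div' (d 1) n]
  have := ((h0.mul h1).mul (hG.pow (d 0 / m))).mul (hH.pow (d 1 / n))
  rwa [hd] at this

theorem adicMonomial_unitriangular {w : (Fin 2 →₀ ℕ) →+ ℕ}
    (hG : HasLeadingMonomial w (Finsupp.single 0 m) G)
    (hH : HasLeadingMonomial w (Finsupp.single 1 n) H) (i j : Fin 2 →₀ ℕ)
    (hij : (basisMonomials (Fin 2) R).repr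
      (adicMonomial m n G H i - basisMonomials (Fin 2) R i) j ≠ 0) : w j < w i := by
  rw [coe_basisMonomials] at hij
  exact hasLeadingMonomial_adicMonomial hG hH i j hij

/-- The `G, H`-adic monomials form a basis of the polynomial ring. -/
noncomputable def adicBasis {w : (Fin 2 →₀ ℕ) →+ ℕ}
    (hG : HasLeadingMonomial w (Finsupp.single 0 m) G)
    (hH : HasLeadingMonomial w (Finsupp.single 1 n) H) :
    Module.Basis (Fin 2 →₀ ℕ) R (MvPolynomial (Fin 2) R) :=
  Module.Basis.mk
    ((basisMonomials (Fin 2) R).linearIndependent_of_unitriangular w _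
      (adicMonomial_unitriangular hG hH))
    ((basisMonomials (Fin 2) R).span_eq_top_of_unitriangular w _
      (adicMonomial_unitriangular hG hH))

theorem adicBasis_apply {w : (Fin 2 →₀ ℕ) →+ ℕ}
    (hG : HasLeadingMonomial w (Finsupp.single 0 m) G)
    (hH : HasLeadingMonomial w (Finsupp.single 1 n) H) (d : Fin 2 →₀ ℕ) :
    adicBasis hG hH d = adicMonomial m n G H d := by
  simp [adicBasis]

theorem left_mul_adicMonomial (hm : 0 < m) (d : Fin 2 →₀ ℕ) :
    G * adicMonomial m n G H d = adicMonomial m n G H (d + Finsupp.single 0 m) := by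
  simp [adicMonomial, Nat.add_div_right _ hm]
  ring

theorem right_mul_adicMonomial (hn : 0 < n) (d : Fin 2 →₀ ℕ) :
    H * adicMonomial m n G H d = adicMonomial m n G H (d + Finsupp.single 1 n) := by
  simp [adicMonomial, Nat.add_div_right _ hn]
  ring

/-- The exponents of the monomials `X ^ ν * Y ^ μ` with `ν < m` and `μ < n`. -/
def boxExponents (m n : ℕ) : Set (Fin 2 →₀ ℕ) := {d | d 0 < m ∧ d 1 < n}

theorem finite_boxExponents (m n : ℕ) : (boxExponents m n).Finite := by
  refine (Set.finite_Iic (Finsupp.single 0 m + Finsupp.single 1 n : Fin 2 →₀ ℕ)).subset ?_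
  rintro d ⟨h0, h1⟩ i
  fin_cases i
  · simpa using h0.le
  · simpa using h1.le

/-- The coordinates in the `G, H`-adic basis whose index is in the box. -/
noncomputable def boxCoordinates {w : (Fin 2 →₀ ℕ) →+ ℕ}
    (hG : HasLeadingMonomial w (Finsupp.single 0 m) G)
    (hH : HasLeadingMonomial w (Finsupp.single 1 n) H) :
    MvPolynomial (Fin 2) R →ₗ[R] (boxExponents m n →₀ R) :=
  Finsupp.lsubtypeDomain (boxExponents m n) ∘ₗ (adicBasis hG hH).repr.toLinearMap

theorem boxCoordinates_adicMonomial_of_notMem {w : (Fin 2 →₀ ℕ) →+ ℕ}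
    (hG : HasLeadingMonomial w (Finsupp.single 0 m) G)
    (hH : HasLeadingMonomial w (Finsupp.single 1 n) H) {d : Fin 2 →₀ ℕ}
    (hd : d ∉ boxExponents m n) : boxCoordinates hG hH (adicMonomial m n G H d) = 0 := by
  classical
  rw [← adicBasis_apply hG hH]
  ext ⟨i, hi⟩
  simp only [boxCoordinates, LinearMap.comp_apply, LinearEquiv.coe_coe, Module.Basis.repr_self,
    Finsupp.lsubtypeDomain_apply, Finsupp.subtypeDomain_apply, Finsupp.zero_apply,
    Finsupp.single_apply]
  exact if_neg fun h : d = i => hd (h ▸ hi)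

theorem boxCoordinates_surjective {w : (Fin 2 →₀ ℕ) →+ ℕ}
    (hG : HasLeadingMonomial w (Finsupp.single 0 m) G)
    (hH : HasLeadingMonomial w (Finsupp.single 1 n) H) :
    Function.Surjective (boxCoordinates hG hH) := by
  classical
  intro x
  refine ⟨(adicBasis hG hH).repr.symm (x.embDomain (Function.Embedding.subtype _)), ?_⟩
  ext i
  simp only [boxCoordinates, LinearMap.comp_apply, LinearEquiv.coe_coe,
    LinearEquiv.apply_symm_apply, Finsupp.lsubtypeDomain_apply, Finsupp.subtypeDomain_apply]
  exact Finsupp.embDomain_apply_self (Function.Embedding.subtype _) x i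

theorem ker_boxCoordinates {w : (Fin 2 →₀ ℕ) →+ ℕ} (hm : 0 < m) (hn : 0 < n)
    (hG : HasLeadingMonomial w (Finsupp.single 0 m) G)
    (hH : HasLeadingMonomial w (Finsupp.single 1 n) H) :
    LinearMap.ker (boxCoordinates hG hH) =
      (Ideal.span {G, H}).restrictScalars R := by
  apply le_antisymm
  · intro f hf
    rw [Submodule.restrictScalars_mem, ← (adicBasis hG hH).linearCombination_repr f,
      Finsupp.linearCombination_apply]
    refine Submodule.sum_mem _ fun d hd => ?_
    have hbox : d ∉ boxExponents m n := fun hbox =>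
      Finsupp.mem_support_iff.mp hd (DFunLike.congr_fun (LinearMap.mem_ker.mp hf) ⟨d, hbox⟩)
    refine Submodule.smul_of_tower_mem _ _ ?_
    rw [adicBasis_apply]
    by_cases h0 : d 0 < m
    · have h1 : d 1 / n ≠ 0 := (Nat.div_pos (not_lt.mp fun h1 => hbox ⟨h0, h1⟩) hn).ne'
      exact Ideal.mul_mem_left _ _
        (Ideal.pow_mem_of_mem _ (Ideal.subset_span (by simp)) _ (Nat.pos_of_ne_zero h1))
    · have h1 : d 0 / m ≠ 0 := (Nat.div_pos (not_lt.mp h0) hm).ne'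
      exact Ideal.mul_mem_right _ _ (Ideal.mul_mem_left _ _
        (Ideal.pow_mem_of_mem _ (Ideal.subset_span (by simp)) _ (Nat.pos_of_ne_zero h1)))
  · have hGker : boxCoordinates hG hH ∘ₗ LinearMap.mulLeft R G = 0 := by
      refine (adicBasis hG hH).ext fun d => ?_
      rw [LinearMap.comp_apply, LinearMap.mulLeft_apply, adicBasis_apply,
        left_mul_adicMonomial hm, boxCoordinates_adicMonomial_of_notMem hG hH,
        LinearMap.zero_apply]
      simp [boxExponents]
    have hHker : boxCoordinates hG hH ∘ₗ LinearMap.mulLeft R H = 0 := by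
      refine (adicBasis hG hH).ext fun d => ?_
      rw [LinearMap.comp_apply, LinearMap.mulLeft_apply, adicBasis_apply,
        right_mul_adicMonomial hn, boxCoordinates_adicMonomial_of_notMem hG hH,
        LinearMap.zero_apply]
      simp [boxExponents]
    intro f hf
    obtain ⟨a, b, rfl⟩ := Ideal.mem_span_pair.mp hf
    rw [LinearMap.mem_ker, map_add, mul_comm a, mul_comm b]
    have ha := LinearMap.congr_fun hGker a
    have hb := LinearMap.congr_fun hHker b
    simp only [LinearMap.comp_apply, LinearMap.mulLeft_apply, LinearMap.zero_apply] at ha hb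
    rw [ha, hb, add_zero]

/-- If `G` and `H` have leading monomials `X ^ m` and `Y ^ n`, then the residue classes of
`X ^ ν * Y ^ μ` with `ν < m` and `μ < n` give coordinates on `R[X,Y]/(G,H)`. -/
noncomputable def quotientSpanPairEquiv {w : (Fin 2 →₀ ℕ) →+ ℕ} (hm : 0 < m) (hn : 0 < n)
    (hG : HasLeadingMonomial w (Finsupp.single 0 m) G)
    (hH : HasLeadingMonomial w (Finsupp.single 1 n) H) :
    (MvPolynomial (Fin 2) R ⧸ Ideal.span {G, H}) ≃ₗ[R] (boxExponents m n →₀ R) :=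
  (Submodule.Quotient.restrictScalarsEquiv R (Ideal.span {G, H})).symm.trans <|
    (Submodule.quotEquivOfEq _ _ (ker_boxCoordinates hm hn hG hH).symm).trans <|
      (boxCoordinates hG hH).quotKerEquivOfSurjective (boxCoordinates_surjective hG hH)

theorem free_and_finite_quotient_span_pair {w : (Fin 2 →₀ ℕ) →+ ℕ} (hm : 0 < m) (hn : 0 < n)
    (hG : HasLeadingMonomial w (Finsupp.single 0 m) G)
    (hH : HasLeadingMonomial w (Finsupp.single 1 n) H) :
    Module.Free R (MvPolynomial (Fin 2) R ⧸ Ideal.span {G, H}) ∧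
      Module.Finite R (MvPolynomial (Fin 2) R ⧸ Ideal.span {G, H}) := by
  have : Finite (boxExponents m n) := finite_boxExponents m n
  exact ⟨.of_equiv (quotientSpanPairEquiv hm hn hG hH).symm,
    .equiv (quotientSpanPairEquiv hm hn hG hH).symm⟩

end AdicBasis

/-- Over an algebraically closed field, the norm of `f` specializes to zero if and only if `f`
vanishes at a point of the fibre. -/
theorem algebraMap_det_mul_eq_zero_iff {R A K : Type*} [CommRing R] [CommRing A] [Algebra R A]
    [Module.Free R A] [Module.Finite R A] [Field K] [IsAlgClosed K] [Algebra R K] (f : A) :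
    algebraMap R K (LinearMap.det (LinearMap.mul R A f)) = 0 ↔ ∃ φ : A →ₐ[R] K, φ f = 0 := by
  have hmul : (LinearMap.mul R A f).baseChange K =
      Algebra.lmul K (TensorProduct R K A) (1 ⊗ₜ[R] f) := by
    ext x
    simp
  rw [← LinearMap.det_baseChange, hmul, ← not_iff_not, ← ne_eq, ← isUnit_iff_ne_zero,
    ← LinearMap.isUnit_iff_isUnit_det, Algebra.lmul_isUnit_iff, ← not_iff_not, not_not]
  constructor
  · intro hu
    obtain ⟨I, hI, hfI⟩ := exists_max_ideal_of_mem_nonunits hu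
    let _ : Field (TensorProduct R K A ⧸ I) := Ideal.Quotient.field I
    let e : K ≃ₐ[K] (TensorProduct R K A ⧸ I) := AlgEquiv.ofBijective (Algebra.ofId _ _)
      IsAlgClosed.algebraMap_bijective_of_isIntegral
    refine ⟨((e.symm.toAlgHom.comp (Ideal.Quotient.mkₐ K I)).restrictScalars R).comp
      Algebra.TensorProduct.includeRight, ?_⟩
    have : Ideal.Quotient.mk I (1 ⊗ₜ[R] f) = 0 := Ideal.Quotient.eq_zero_iff_mem.mpr hfI
    simp [this]
  · rintro ⟨φ, hφ⟩ hu
    have := hu.map (Algebra.TensorProduct.lift (Algebra.ofId K K) φ fun _ _ => Commute.all _ _)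
    simp [hφ] at this

section Weierstrass

theorem C_mul_X_pow_mul_X_pow {R : Type*} [CommRing R] (c : R) (s t : ℕ) :
    (C c * X 0 ^ s * X 1 ^ t : MvPolynomial (Fin 2) R) =
      monomial (Finsupp.single 0 s + Finsupp.single 1 t) c := by
  rw [X_pow_eq_monomial, X_pow_eq_monomial, C_mul_monomial, monomial_mul, mul_one, mul_one]

variable {R : Type} [CommRing R] {p q : ℕ}

theorem pderiv_zero_wPoly (a : idxSet p q → R) :
    pderiv 0 (wPoly R p q a) = -(C (q : R) * X 0 ^ (q - 1)) +
      ∑ i : idxSet p q, C (a i * (i : ℕ × ℕ).1) * X 0 ^ ((i : ℕ × ℕ).1 - 1) *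
        X 1 ^ (i : ℕ × ℕ).2 := by
  simp only [wPoly, map_add, map_sub, map_sum]
  congr 1
  · simp [pderiv_X]
  · refine Finset.sum_congr rfl fun i _ => ?_
    simp [pderiv_X]
    ring

theorem pderiv_one_wPoly (a : idxSet p q → R) :
    pderiv 1 (wPoly R p q a) = C (p : R) * X 1 ^ (p - 1) +
      ∑ i : idxSet p q, C (a i * (i : ℕ × ℕ).2) * X 0 ^ (i : ℕ × ℕ).1 *
        X 1 ^ ((i : ℕ × ℕ).2 - 1) := by
  simp only [wPoly, map_add, map_sub, map_sum]
  congr 1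
  · simp [pderiv_X]
  · refine Finset.sum_congr rfl fun i _ => ?_
    simp [pderiv_X]
    ring

theorem weight_lt_of_mem_idxSet {i : ℕ × ℕ} (hi : i ∈ idxSet p q) :
    i.1 * p + i.2 * q < p * q :=
  (Finset.mem_filter.mp hi).2

theorem hasLeadingMonomial_pderiv_zero_wPoly (a : idxSet p q → R) {u : R} (hu : u * q = -1) :
    HasLeadingMonomial (Finsupp.weight ![p, q]) (Finsupp.single 0 (q - 1))
      (C u * pderiv 0 (wPoly R p q a)) := by
  classical
  intro e he
  have hsub : C u * pderiv 0 (wPoly R p q a) - monomial (Finsupp.single 0 (q - 1)) 1 =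
      ∑ i : idxSet p q, monomial (Finsupp.single 0 ((i : ℕ × ℕ).1 - 1) +
        Finsupp.single 1 (i : ℕ × ℕ).2) (u * (a i * (i : ℕ × ℕ).1)) := by
    rw [pderiv_zero_wPoly, mul_add, mul_neg, ← mul_assoc, ← C_mul, hu, ← X_pow_eq_monomial,
      Finset.mul_sum]
    simp only [← C_mul_X_pow_mul_X_pow, C_mul, C_neg, C_1, mul_assoc]
    ring
  rw [hsub, coeff_sum] at he
  obtain ⟨⟨⟨ν, μ⟩, hi⟩, -, hne⟩ := Finset.exists_ne_zero_of_sum_ne_zero he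
  rw [coeff_monomial] at hne
  split_ifs at hne with heq
  · subst heq
    have hlt := weight_lt_of_mem_idxSet hi
    obtain _ | ν := ν
    · simp at hne
    obtain _ | q := q
    · simp at hlt
    simp [Finsupp.weight_single] at hlt ⊢
    nlinarith
  · exact absurd rfl hne

theorem hasLeadingMonomial_pderiv_one_wPoly (a : idxSet p q → R) {u : R} (hu : u * p = 1) :
    HasLeadingMonomial (Finsupp.weight ![p, q]) (Finsupp.single 1 (p - 1))
      (C u * pderiv 1 (wPoly R p q a)) := by
  classical
  intro e he
  have hsub : C u * pderiv 1 (wPoly R p q a) - monomial (Finsupp.single 1 (p - 1)) 1 =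
      ∑ i : idxSet p q, monomial (Finsupp.single 0 (i : ℕ × ℕ).1 +
        Finsupp.single 1 ((i : ℕ × ℕ).2 - 1)) (u * (a i * (i : ℕ × ℕ).2)) := by
    rw [pderiv_one_wPoly, mul_add, ← mul_assoc, ← C_mul, hu, ← X_pow_eq_monomial,
      Finset.mul_sum]
    simp only [← C_mul_X_pow_mul_X_pow, C_mul, C_1, mul_assoc]
    ring
  rw [hsub, coeff_sum] at he
  obtain ⟨⟨⟨ν, μ⟩, hi⟩, -, hne⟩ := Finset.exists_ne_zero_of_sum_ne_zero he
  rw [coeff_monomial] at hne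
  split_ifs at hne with heq
  · subst heq
    have hlt := weight_lt_of_mem_idxSet hi
    obtain _ | μ := μ
    · simp at hne
    obtain _ | p := p
    · simp at hlt
    simp [Finsupp.weight_single] at hlt ⊢
    nlinarith
  · exact absurd rfl hne

theorem free_and_finite_jacobian_quotient (hp : 1 < p) (hq : 1 < q) (hpR : IsUnit (p : R))
    (hqR : IsUnit (q : R)) (a : idxSet p q → R) :
    Module.Free R (MvPolynomial (Fin 2) R ⧸
        Ideal.span {pderiv 0 (wPoly R p q a), pderiv 1 (wPoly R p q a)}) ∧
      Module.Finite R (MvPolynomial (Fin 2) R ⧸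
        Ideal.span {pderiv 0 (wPoly R p q a), pderiv 1 (wPoly R p q a)}) := by
  obtain ⟨u, hu⟩ := hqR.exists_left_inv
  obtain ⟨v, hv⟩ := hpR.exists_left_inv
  have hu' : -u * q = -1 := by rw [neg_mul, hu]
  have huC : IsUnit (C (-u) : MvPolynomial (Fin 2) R) := (IsUnit.of_mul_eq_one _ hu).neg.map C
  have hvC : IsUnit (C v : MvPolynomial (Fin 2) R) := (IsUnit.of_mul_eq_one _ hv).map C
  have hspan : Ideal.span {pderiv 0 (wPoly R p q a), pderiv 1 (wPoly R p q a)} =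
      Ideal.span {C (-u) * pderiv 0 (wPoly R p q a), C v * pderiv 1 (wPoly R p q a)} := by
    rw [Ideal.span_insert, Ideal.span_insert, Ideal.span_singleton_mul_left_unit huC,
      Ideal.span_singleton_mul_left_unit hvC]
  rw [hspan]
  exact free_and_finite_quotient_span_pair (by omega) (by omega)
    (hasLeadingMonomial_pderiv_zero_wPoly a hu') (hasLeadingMonomial_pderiv_one_wPoly a hv)

theorem map_wPoly {S : Type} [CommRing S] (f : R →+* S) (a : idxSet p q → R) :
    map f (wPoly R p q a) = wPoly S p q (f ∘ a) := by
  simp [wPoly]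

theorem genF_eq_wPoly (K : Type) [Field K] (p q : ℕ) :
    genF K p q = wPoly (coefRing K p q) p q MvPolynomial.X := rfl

theorem map_eval_genF {K : Type} [Field K] (a : idxSet p q → K) :
    map (eval a) (genF K p q) = wPoly K p q a := by
  rw [genF_eq_wPoly, map_wPoly]
  exact congrArg (wPoly K p q) (funext fun i => eval_X i)

theorem exists_isSingAt_iff_eval_genDelta_eq_zero {K : Type} [Field K] [IsAlgClosed K]
    [CharZero K] (hp : 1 < p) (hq : 1 < q) (a : idxSet p q → K) :
    (∃ P : K × K, IsSingAt K (wPoly K p q a) P) ↔ eval a (genDelta K p q) = 0 := by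
  have hunit : ∀ k : ℕ, 1 < k → IsUnit (k : coefRing K p q) := fun k hk => by
    have := (isUnit_iff_ne_zero.mpr (Nat.cast_ne_zero.mpr (by omega) : (k : K) ≠ 0)).map
      (C : K →+* coefRing K p q)
    rwa [map_natCast] at this
  obtain ⟨_, _⟩ := free_and_finite_jacobian_quotient hp hq (hunit p hp) (hunit q hq)
    (MvPolynomial.X : idxSet p q → coefRing K p q)
  rw [← genF_eq_wPoly] at *
  let _ : Algebra (coefRing K p q) K := (eval a).toAlgebra
  have haeval : ∀ (x : Fin 2 → K) (g : genRing K p q), aeval x g = eval x (map (eval a) g) :=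
    fun x g => by rw [eval_map]; rfl
  refine Iff.trans ?_ (algebraMap_det_mul_eq_zero_iff (K := K) (Ideal.Quotient.mk
    (Ideal.span {pderiv 0 (genF K p q), pderiv 1 (genF K p q)}) (genF K p q))).symm
  simp only [IsSingAt, ← map_eval_genF, pderiv_map, ← haeval]
  constructor
  · rintro ⟨P, h, h0, h1⟩
    refine ⟨Ideal.Quotient.liftₐ _ (aeval ![P.1, P.2]) fun g hg => ?_, h⟩
    obtain ⟨b, c, rfl⟩ := Ideal.mem_span_pair.mp hg
    rw [map_add, map_mul, map_mul, h0, h1, mul_zero, mul_zero, add_zero]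
  · rintro ⟨φ, hφ⟩
    let ψ := φ.comp (Ideal.Quotient.mkₐ (coefRing K p q)
      (Ideal.span {pderiv 0 (genF K p q), pderiv 1 (genF K p q)}))
    have hψ : aeval ![ψ (X 0), ψ (X 1)] = ψ := by
      ext i
      fin_cases i <;> simp
    have hzero : ∀ g ∈ Ideal.span {pderiv 0 (genF K p q), pderiv 1 (genF K p q)}, ψ g = 0 := by
      intro g hg
      change φ (Ideal.Quotient.mk _ g) = 0
      rw [Ideal.Quotient.eq_zero_iff_mem.mpr hg, map_zero]
    refine ⟨(ψ (X 0), ψ (X 1)), ?_⟩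
    rw [hψ]
    exact ⟨hφ, hzero _ (Ideal.subset_span (by simp)), hzero _ (Ideal.subset_span (by simp))⟩

theorem not_isSingAt_wPoly_constant {K : Type} [Field K] [CharZero K] (hp : 1 < p) (hq : 1 < q)
    (P : K × K) :
    ¬ IsSingAt K (wPoly K p q fun i => if (i : ℕ × ℕ) = (0, 0) then 1 else 0) P := by
  have hmem : ((0, 0) : ℕ × ℕ) ∈ idxSet p q := by
    simp only [idxSet, Finset.mem_filter, Finset.mem_product, Finset.mem_range]
    exact ⟨⟨by omega, by omega⟩, by simpa using ⟨by omega, by omega⟩⟩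
  have hF : (wPoly K p q fun i => if (i : ℕ × ℕ) = (0, 0) then 1 else 0) =
      X 1 ^ p - X 0 ^ q + 1 := by
    rw [wPoly, Finset.sum_eq_single ⟨(0, 0), hmem⟩]
    · simp
    · rintro i - hi
      simp [show (i : ℕ × ℕ) ≠ (0, 0) from fun h => hi (Subtype.ext h)]
    · simp
  rw [hF]
  rintro ⟨h, h0, h1⟩
  have hp0 : p ≠ 0 := by omega
  have hq0 : q ≠ 0 := by omega
  have hx : P.1 = 0 := by
    simp [pderiv_X, hq0] at h0
    exact h0.1
  have hy : P.2 = 0 := by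
    simp [pderiv_X, hp0] at h1
    exact h1.1
  simp [hx, hy, hp0, hq0] at h

end Weierstrass

/-- `Δ ≠ 0`, and the singular curves of type `p,q` are exactly the points of the
hypersurface `Δ = 0`: `C_a` has a singular point iff `Δ(a) = 0`. -/
theorem singular_locus_is_hypersurface_delta
    (K : Type) [Field K] [IsAlgClosed K] [CharZero K]
    (p q : ℕ) (hp : 1 < p) (hpq : p < q) (hco : Nat.Coprime p q) :
    genDelta K p q ≠ 0 ∧
    ∀ a : idxSet p q → K,
      (∃ P : K × K, IsSingAt K (wPoly K p q a) P) ↔ eval a (genDelta K p q) = 0 := by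
  have hq : 1 < q := hp.trans hpq
  refine ⟨fun h => ?_, exists_isSingAt_iff_eval_genDelta_eq_zero hp hq⟩
  obtain ⟨P, hP⟩ := (exists_isSingAt_iff_eval_genDelta_eq_zero (K := K) hp hq
    fun i => if (i : ℕ × ℕ) = (0, 0) then 1 else 0).mpr (by rw [h, map_zero])
  exact not_isSingAt_wPoly_constant hp hq P hP
end
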